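/- arXiv:1204.6434 — 3 statements merged into one kernel-verified Lean document; each statement's English description precedes it below -/
import Mathlib

section
/- Let n ≥ 1, α ∈ (0,1) and T > 0. Let c : [0,T]×ℝⁿ → ℝ be bounded and measurable, and define v(t,x) := ∫₀^t ∫_{ℝⁿ} Γ(t−τ, x−y) c(τ,y) dy dτ. Then there is a constant C depending only on n and α such that for all 0 ≤ t < t′ ≤ T and x ∈ ℝⁿ, |v(t′,x) − v(t,x)| ≤ C · T^{1−α/2} · (t′−t)^{α/2} · sup_{(τ,y)} |c(τ,y)|. -/
open MeasureTheory
open scoped BigOperators ENNReal Topology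

noncomputable section

/-- The heat kernel `Γ(t,x) = (4πt)^{-n/2} exp(-|x|²/(4t))` on `ℝⁿ`. -/
def heatKernel (n : ℕ) (t : ℝ) (x : EuclideanSpace ℝ (Fin n)) : ℝ :=
  (4 * Real.pi * t) ^ (-(n : ℝ) / 2) * Real.exp (-‖x‖ ^ 2 / (4 * t))

namespace HeatKernel

variable {n : ℕ}

theorem heatKernel_nonneg {s : ℝ} (hs : 0 ≤ s) (z : EuclideanSpace ℝ (Fin n)) :
    0 ≤ heatKernel n s z := by
  unfold heatKernel
  positivity

theorem heatKernel_zero (hn : 1 ≤ n) (z : EuclideanSpace ℝ (Fin n)) : heatKernel n 0 z = 0 := by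
  have h : -(n : ℝ) / 2 ≠ 0 := by
    have : (1 : ℝ) ≤ n := by exact_mod_cast hn
    linarith
  simp [heatKernel, Real.zero_rpow h]

theorem measurable_heatKernel :
    Measurable fun p : ℝ × EuclideanSpace ℝ (Fin n) => heatKernel n p.1 p.2 := by
  unfold heatKernel
  fun_prop

theorem integral_heatKernel {s : ℝ} (hs : 0 < s) :
    ∫ z : EuclideanSpace ℝ (Fin n), heatKernel n s z = 1 := by
  have h : ∀ z : EuclideanSpace ℝ (Fin n), heatKernel n s z =
      (4 * Real.pi * s) ^ (-(n : ℝ) / 2) * Real.exp (-(1 / (4 * s)) * ‖z‖ ^ 2) := by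
    intro z
    unfold heatKernel
    congr 2
    ring
  simp_rw [h]
  have hb : Real.pi / (1 / (4 * s)) = 4 * Real.pi * s := by field_simp
  rw [integral_const_mul, GaussianFourier.integral_rexp_neg_mul_sq_norm (by positivity), hb,
    finrank_euclideanSpace_fin, ← Real.rpow_add (by positivity), neg_div, neg_add_cancel,
    Real.rpow_zero]

theorem integrable_heatKernel {s : ℝ} (hs : 0 < s) :
    Integrable fun z : EuclideanSpace ℝ (Fin n) => heatKernel n s z :=
  .of_integral_ne_zero (by rw [integral_heatKernel hs]; exact one_ne_zero)

theorem integral_heatKernel_sub {s : ℝ} (hs : 0 < s) (x : EuclideanSpace ℝ (Fin n)) :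
    ∫ y, heatKernel n s (x - y) = 1 := by
  rw [integral_sub_left_eq_self (fun z => heatKernel n s z) volume x, integral_heatKernel hs]

theorem integrable_heatKernel_sub {s : ℝ} (hs : 0 < s) (x : EuclideanSpace ℝ (Fin n)) :
    Integrable fun y => heatKernel n s (x - y) :=
  (integrable_heatKernel hs).comp_sub_left x

/-- Pointwise, the heat kernel decreases in time at most by the decay of its normalization. -/
theorem rpow_mul_heatKernel_le {s h : ℝ} (hs : 0 < s) (hh : 0 ≤ h)
    (z : EuclideanSpace ℝ (Fin n)) :
    (s / (s + h)) ^ ((n : ℝ) / 2) * heatKernel n s z ≤ heatKernel n (s + h) z := by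
  have hpi := Real.pi_pos
  unfold heatKernel
  have hc : (s / (s + h)) ^ ((n : ℝ) / 2) * (4 * Real.pi * s) ^ (-(n : ℝ) / 2) =
      (4 * Real.pi * (s + h)) ^ (-(n : ℝ) / 2) := by
    rw [neg_div, Real.rpow_neg (by positivity), Real.rpow_neg (by positivity),
      ← Real.inv_rpow (by positivity), ← Real.inv_rpow (by positivity),
      ← Real.mul_rpow (by positivity) (by positivity)]
    congr 1
    field_simp
  rw [← mul_assoc, hc]
  gcongr _ * Real.exp ?_
  rw [neg_div, neg_div, neg_le_neg_iff]
  gcongr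
  linarith

theorem one_sub_rpow_le {s h β : ℝ} (hs : 0 < s) (hh : 0 ≤ h) (hβ : 0 ≤ β) (hβ1 : β ≤ 1) :
    1 - (s / (s + h)) ^ ((n : ℝ) / 2) ≤ n * (h ^ β * s ^ (-β)) := by
  have hr0 : 0 < s / (s + h) := by positivity
  have hr1 : s / (s + h) ≤ 1 := by
    rw [div_le_one (by positivity)]
    linarith
  have hpow : (s / (s + h)) ^ n ≤ (s / (s + h)) ^ ((n : ℝ) / 2) := by
    rw [← Real.rpow_natCast]
    refine Real.rpow_le_rpow_of_exponent_ge hr0 hr1 ?_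
    have : (0 : ℝ) ≤ n := n.cast_nonneg
    linarith
  have hbern := one_add_mul_le_pow (a := s / (s + h) - 1) (by linarith) n
  rw [add_sub_cancel] at hbern
  have hq : 1 - s / (s + h) = h / (s + h) := by
    field_simp
    ring
  have hq0 : 0 ≤ h / (s + h) := by positivity
  have hroot : h / (s + h) ≤ h ^ β * s ^ (-β) := by
    calc h / (s + h) ≤ (h / (s + h)) ^ β :=
          Real.self_le_rpow_of_le_one hq0 (by linarith) hβ1
      _ ≤ (h / s) ^ β := by
          gcongr
          linarith
      _ = h ^ β * s ^ (-β) := by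
          rw [Real.div_rpow hh hs.le, Real.rpow_neg hs.le, div_eq_mul_inv]
  calc 1 - (s / (s + h)) ^ ((n : ℝ) / 2) ≤ n * (h / (s + h)) := by
        rw [← hq]
        linarith
    _ ≤ n * (h ^ β * s ^ (-β)) := by gcongr

theorem abs_heatKernel_add_sub_le {s h β : ℝ} (hs : 0 < s) (hh : 0 ≤ h) (hβ : 0 ≤ β)
    (hβ1 : β ≤ 1) (z : EuclideanSpace ℝ (Fin n)) :
    |heatKernel n (s + h) z - heatKernel n s z| ≤
      heatKernel n (s + h) z - heatKernel n s z +
        2 * (n * (h ^ β * s ^ (-β))) * heatKernel n s z := by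
  have h0 := heatKernel_nonneg hs.le z
  have h1 := rpow_mul_heatKernel_le hs hh z
  have h2 := mul_le_mul_of_nonneg_right (one_sub_rpow_le (n := n) hs hh hβ hβ1) h0
  have h3 : 0 ≤ n * (h ^ β * s ^ (-β)) * heatKernel n s z := by positivity
  rw [abs_le]
  constructor <;> nlinarith

/-- The space average of `f` against the heat kernel at time `s` centred at `x`. -/
def heatAverage (n : ℕ) (s : ℝ) (f : EuclideanSpace ℝ (Fin n) → ℝ)
    (x : EuclideanSpace ℝ (Fin n)) : ℝ :=
  ∫ y, heatKernel n s (x - y) * f y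

theorem integrable_heatKernel_mul {s M : ℝ} (hs : 0 < s) {f : EuclideanSpace ℝ (Fin n) → ℝ}
    (hf : Measurable f) (hM : ∀ y, |f y| ≤ M) (x : EuclideanSpace ℝ (Fin n)) :
    Integrable fun y => heatKernel n s (x - y) * f y :=
  (integrable_heatKernel_sub hs x).mul_bdd hf.aestronglyMeasurable (ae_of_all _ hM)

theorem abs_heatAverage_le (hn : 1 ≤ n) {s M : ℝ} (hs : 0 ≤ s)
    {f : EuclideanSpace ℝ (Fin n) → ℝ} (hM : ∀ y, |f y| ≤ M) (x : EuclideanSpace ℝ (Fin n)) :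
    |heatAverage n s f x| ≤ M := by
  unfold heatAverage
  rcases hs.eq_or_lt with rfl | hs
  · simpa [heatKernel_zero hn] using (abs_nonneg _).trans (hM 0)
  · calc |∫ y, heatKernel n s (x - y) * f y| ≤ ∫ y, heatKernel n s (x - y) * M := by
          rw [← Real.norm_eq_abs]
          refine norm_integral_le_of_norm_le ((integrable_heatKernel_sub hs x).mul_const M)
            (ae_of_all _ fun y => ?_)
          rw [Real.norm_eq_abs, abs_mul, abs_of_nonneg (heatKernel_nonneg hs.le _)]
          exact mul_le_mul_of_nonneg_left (hM y) (heatKernel_nonneg hs.le _)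
      _ = M := by rw [integral_mul_const, integral_heatKernel_sub hs, one_mul]

theorem abs_heatAverage_add_sub_le {s h β M : ℝ} (hs : 0 < s) (hh : 0 ≤ h) (hβ : 0 ≤ β)
    (hβ1 : β ≤ 1) {f : EuclideanSpace ℝ (Fin n) → ℝ} (hf : Measurable f)
    (hM : ∀ y, |f y| ≤ M) (x : EuclideanSpace ℝ (Fin n)) :
    |heatAverage n (s + h) f x - heatAverage n s f x| ≤
      2 * (n * (h ^ β * s ^ (-β))) * M := by
  have hsh : 0 < s + h := by positivity
  set K := 2 * (n * (h ^ β * s ^ (-β)))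
  have i1 := integrable_heatKernel_sub (n := n) hs x
  have i2 := integrable_heatKernel_sub (n := n) hsh x
  have hsub : Integrable fun y => heatKernel n (s + h) (x - y) - heatKernel n s (x - y) :=
    i2.sub i1
  unfold heatAverage
  rw [← integral_sub (integrable_heatKernel_mul hsh hf hM x)
    (integrable_heatKernel_mul hs hf hM x)]
  calc |∫ y, (heatKernel n (s + h) (x - y) * f y - heatKernel n s (x - y) * f y)|
      ≤ ∫ y, (heatKernel n (s + h) (x - y) - heatKernel n s (x - y) +
          K * heatKernel n s (x - y)) * M := by
        rw [← Real.norm_eq_abs]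
        refine norm_integral_le_of_norm_le ((hsub.add (i1.const_mul K)).mul_const M)
          (ae_of_all _ fun y => ?_)
        rw [← sub_mul, Real.norm_eq_abs, abs_mul]
        have hb := abs_heatKernel_add_sub_le hs hh hβ hβ1 (x - y)
        exact mul_le_mul hb (hM y) (abs_nonneg _) ((abs_nonneg _).trans hb)
    _ = K * M := by
        rw [integral_mul_const, integral_add hsub (i1.const_mul K), integral_sub i2 i1,
          integral_const_mul, integral_heatKernel_sub hs, integral_heatKernel_sub hsh]
        ring

theorem intervalIntegrable_heatAverage (hn : 1 ≤ n) {c : ℝ → EuclideanSpace ℝ (Fin n) → ℝ}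
    (hc : Measurable fun q : ℝ × EuclideanSpace ℝ (Fin n) => c q.1 q.2) {a b t M : ℝ}
    (hab : a ≤ b) (hbt : b ≤ t) (hM : ∀ τ ∈ Set.Ioc a b, ∀ y, |c τ y| ≤ M)
    (x : EuclideanSpace ℝ (Fin n)) :
    IntervalIntegrable (fun τ => heatAverage n (t - τ) (c τ) x) volume a b := by
  rw [intervalIntegrable_iff_integrableOn_Ioc_of_le hab]
  have hk : Measurable fun q : ℝ × EuclideanSpace ℝ (Fin n) =>
      heatKernel n (t - q.1) (x - q.2) * c q.1 q.2 :=
    (measurable_heatKernel.comp (by fun_prop :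
      Measurable fun q : ℝ × EuclideanSpace ℝ (Fin n) => (t - q.1, x - q.2))).mul hc
  have hmeas : StronglyMeasurable fun τ => heatAverage n (t - τ) (c τ) x :=
    hk.stronglyMeasurable.integral_prod_right
  refine Measure.integrableOn_of_bounded (M := M) measure_Ioc_lt_top.ne
    hmeas.aestronglyMeasurable ((ae_restrict_iff' measurableSet_Ioc).2 (ae_of_all _ ?_))
  exact fun τ hτ => abs_heatAverage_le hn (by linarith [hτ.2]) (hM τ hτ) x

theorem integral_sub_rpow_neg {t β : ℝ} (hβ : β < 1) :
    ∫ τ in (0 : ℝ)..t, (t - τ) ^ (-β) = t ^ (1 - β) / (1 - β) := by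
  rw [intervalIntegral.integral_comp_sub_left (fun s : ℝ => s ^ (-β)), sub_self, sub_zero,
    integral_rpow (Or.inl (by linarith)), neg_add_eq_sub, Real.zero_rpow (by linarith), sub_zero]

theorem intervalIntegrable_sub_rpow_neg {t β : ℝ} (hβ : β < 1) :
    IntervalIntegrable (fun τ => (t - τ) ^ (-β)) volume 0 t := by
  have h := (intervalIntegral.intervalIntegrable_rpow' (a := t) (b := 0) (r := -β)
    (by linarith)).comp_sub_left t
  simpa using h

end HeatKernel

open HeatKernel

/-- **Time Hölder continuity of the Duhamel term for a bounded source `c`**: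
`|v(t',x) - v(t,x)| ≤ C T^{1-α/2} (t'-t)^{α/2} ‖c‖_∞` where
`v(t,x) = ∫₀^t ∫ Γ(t-τ, x-y) c(τ,y) dy dτ`. -/
theorem statement9 (n : ℕ) (hn : 1 ≤ n) (α : ℝ) (hα : α ∈ Set.Ioo (0 : ℝ) 1) :
    ∃ C : ℝ, 0 < C ∧
      ∀ T : ℝ, 0 < T →
      ∀ c : ℝ → EuclideanSpace ℝ (Fin n) → ℝ,
        Measurable (fun q : ℝ × EuclideanSpace ℝ (Fin n) => c q.1 q.2) →
      ∀ M : ℝ, (∀ τ ∈ Set.Icc (0 : ℝ) T, ∀ y, |c τ y| ≤ M) →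
      ∀ t t' : ℝ, 0 ≤ t → t < t' → t' ≤ T → ∀ x : EuclideanSpace ℝ (Fin n),
        |(∫ τ in Set.Ioc (0 : ℝ) t', ∫ y, heatKernel n (t' - τ) (x - y) * c τ y) -
         (∫ τ in Set.Ioc (0 : ℝ) t, ∫ y, heatKernel n (t - τ) (x - y) * c τ y)| ≤
          C * T ^ (1 - α / 2) * (t' - t) ^ (α / 2) * M := by
  obtain ⟨hα0, hα1⟩ := hα
  refine ⟨4 * n + 1, by positivity, ?_⟩
  intro T hT c hc M hM t t' ht htt' ht'T x
  set β := α / 2 with hβdef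
  have hβ0 : 0 < β := by linarith
  have hβ1 : β < 1 / 2 := by linarith
  have hM0 : 0 ≤ M := (abs_nonneg _).trans (hM 0 ⟨le_rfl, hT.le⟩ 0)
  have hh : 0 < t' - t := sub_pos.2 htt'
  have ht' : 0 ≤ t' := ht.trans htt'.le
  have hint : ∀ a b u, 0 ≤ a → a ≤ b → b ≤ u → b ≤ T →
      IntervalIntegrable (fun τ => heatAverage n (u - τ) (c τ) x) volume a b :=
    fun a b u ha hab hbu hbT => intervalIntegrable_heatAverage hn hc hab hbu
      (fun τ hτ => hM τ ⟨ha.trans hτ.1.le, hτ.2.trans hbT⟩) x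
  have i1 := hint 0 t t' le_rfl ht htt'.le (htt'.le.trans ht'T)
  have i2 := hint t t' t' ht htt'.le le_rfl ht'T
  have i3 := hint 0 t t le_rfl ht le_rfl (htt'.le.trans ht'T)
  change |(∫ τ in Set.Ioc (0 : ℝ) t', heatAverage n (t' - τ) (c τ) x) -
    ∫ τ in Set.Ioc (0 : ℝ) t, heatAverage n (t - τ) (c τ) x| ≤ _
  rw [← intervalIntegral.integral_of_le ht', ← intervalIntegral.integral_of_le ht,
    ← intervalIntegral.integral_add_adjacent_intervals i1 i2, add_sub_right_comm,
    ← intervalIntegral.integral_sub i1 i3]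
  have hnear : |∫ τ in t..t', heatAverage n (t' - τ) (c τ) x| ≤ M * (t' - t) := by
    have := intervalIntegral.norm_integral_le_of_norm_le_const (a := t) (b := t') (C := M)
      (f := fun τ => heatAverage n (t' - τ) (c τ) x) fun τ hτ => by
        rw [Set.uIoc_of_le htt'.le] at hτ
        exact abs_heatAverage_le hn (by linarith [hτ.2])
          (hM τ ⟨ht.trans hτ.1.le, hτ.2.trans ht'T⟩) x
    rwa [Real.norm_eq_abs, abs_of_pos hh] at this
  have hfar : |∫ τ in (0 : ℝ)..t,
      (heatAverage n (t' - τ) (c τ) x - heatAverage n (t - τ) (c τ) x)| ≤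
        2 * n * (t' - t) ^ β * M * (t ^ (1 - β) / (1 - β)) := by
    rw [← Real.norm_eq_abs, ← integral_sub_rpow_neg (by linarith : β < 1),
      ← intervalIntegral.integral_const_mul]
    refine intervalIntegral.norm_integral_le_of_norm_le ht ?_
      ((intervalIntegrable_sub_rpow_neg (by linarith : β < 1)).const_mul _)
    filter_upwards [Measure.ae_ne volume t] with τ hτt hτ
    have hpos : 0 < t - τ := sub_pos.2 (lt_of_le_of_ne hτ.2 hτt)
    have hle := abs_heatAverage_add_sub_le hpos hh.le hβ0.le (by linarith)
      (f := c τ) (M := M) (hc.comp measurable_prodMk_left)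
      (hM τ ⟨hτ.1.le, by linarith [hτ.2]⟩) x
    rw [show t - τ + (t' - t) = t' - τ by ring] at hle
    exact hle.trans (le_of_eq (by ring))
  have hh_le : t' - t ≤ T ^ (1 - β) * (t' - t) ^ β := by
    calc t' - t = (t' - t) ^ (1 - β) * (t' - t) ^ β := by
          rw [← Real.rpow_add hh, sub_add_cancel, Real.rpow_one]
      _ ≤ T ^ (1 - β) * (t' - t) ^ β := by
          gcongr <;> linarith
  have ht_le : t ^ (1 - β) / (1 - β) ≤ 2 * T ^ (1 - β) := by
    have hp : t ^ (1 - β) ≤ T ^ (1 - β) := by gcongr <;> linarith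
    have hp0 : 0 ≤ T ^ (1 - β) := by positivity
    rw [div_le_iff₀ (by linarith)]
    nlinarith
  calc _ ≤ 2 * n * (t' - t) ^ β * M * (t ^ (1 - β) / (1 - β)) + M * (t' - t) :=
        (abs_add_le _ _).trans (add_le_add hfar hnear)
    _ ≤ 2 * n * (t' - t) ^ β * M * (2 * T ^ (1 - β)) + M * (T ^ (1 - β) * (t' - t) ^ β) := by
        gcongr
    _ = (4 * n + 1) * T ^ (1 - β) * (t' - t) ^ β * M := by ring
end
end

section
/- Let n ≥ 1, α ∈ (0,1) and T > 0. Let b : [0,T]×ℝⁿ → ℝⁿ be bounded and measurable, and define v(t,x) := ∫₀^t ∫_{ℝⁿ} ∇_xΓ(t−τ, x−y) · b(τ,y) dy dτ (the dot denoting the Euclidean inner product). Then there is a constant C depending only on n and α such that, writing ‖b‖_∞ := sup_{(τ,y)} |b(τ,y)|: (i) |v(t,x)| ≤ C · t^{1/2} · ‖b‖_∞ for all t ∈ (0,T]; (ii) |v(t,x′) − v(t,x)| ≤ C · T^{(1−α)/2} · |x′−x|^α · ‖b‖_∞ for all t ∈ (0,T] and x, x′ ∈ ℝⁿ; (iii)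 |v(t′,x) − v(t,x)| ≤ C · T^{(1−α)/2} · (t′−t)^{α/2} · ‖b‖_∞ for all 0 ≤ t < t′ ≤ T. -/
open MeasureTheory
open scoped BigOperators ENNReal Topology

noncomputable section

open scoped RealInnerProductSpace

/-- The explicit spatial gradient `-(z / 2s) Γ(s,z)` of the heat kernel. -/
def heatGrad (n : ℕ) (s : ℝ) (z : EuclideanSpace ℝ (Fin n)) : EuclideanSpace ℝ (Fin n) :=
  (-(1 / (2 * s)) * heatKernel n s z) • z

theorem gradient_heatKernel (n : ℕ) {s : ℝ} (hs : 0 < s) (z : EuclideanSpace ℝ (Fin n)) :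
    gradient (heatKernel n s) z = heatGrad n s z := by
  apply HasGradientAt.gradient
  rw [hasGradientAt_iff_hasFDerivAt]
  have h1 : HasFDerivAt (fun x : EuclideanSpace ℝ (Fin n) => -‖x‖ ^ 2 / (4 * s))
      ((-(1 / (4 * s))) • ((2 : ℕ) • innerSL ℝ z)) z := by
    have := ((hasStrictFDerivAt_norm_sq z).hasFDerivAt).const_mul (-(1 / (4 * s)))
    refine this.congr_of_eventuallyEq (Filter.Eventually.of_forall fun x => ?_)
    simp only
    ring
  have h2 := h1.exp.const_mul ((4 * Real.pi * s) ^ (-(n : ℝ) / 2))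
  refine h2.congr_fderiv ?_
  ext w
  simp [heatGrad, heatKernel]
  field_simp
  ring

theorem measurable_heatGrad (n : ℕ) :
    Measurable fun p : ℝ × EuclideanSpace ℝ (Fin n) => heatGrad n p.1 p.2 := by
  unfold heatGrad heatKernel
  fun_prop

theorem norm_heatGrad (n : ℕ) {s : ℝ} (hs : 0 < s) (z : EuclideanSpace ℝ (Fin n)) :
    ‖heatGrad n s z‖ = 1 / (2 * s) * heatKernel n s z * ‖z‖ := by
  have : 0 ≤ heatKernel n s z := by unfold heatKernel; positivity
  rw [heatGrad, norm_smul, norm_mul, norm_neg, Real.norm_of_nonneg this,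
    Real.norm_of_nonneg (by positivity)]

theorem heatGrad_mul (n : ℕ) {s r : ℝ} (hs : 0 < s) (hr : 0 < r) (z : EuclideanSpace ℝ (Fin n)) :
    heatGrad n (s * r) z =
      (s ^ (-(n : ℝ) / 2) * s ^ (-(1 / 2) : ℝ)) • heatGrad n r ((Real.sqrt s)⁻¹ • z) := by
  have h4 : 0 < 4 * Real.pi * r := by positivity
  have hq : 0 < Real.sqrt s := Real.sqrt_pos.2 hs
  have hss : Real.sqrt s ^ 2 = s := Real.sq_sqrt hs.le
  rw [heatGrad, heatGrad, heatKernel, heatKernel, smul_smul, smul_smul, norm_smul, mul_pow,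
    show 4 * Real.pi * (s * r) = s * (4 * Real.pi * r) by ring, Real.mul_rpow hs.le h4.le,
    Real.rpow_neg hs.le (1 / 2), ← Real.sqrt_eq_rpow]
  have he : -((‖(Real.sqrt s)⁻¹‖ ^ 2) * ‖z‖ ^ 2) / (4 * r) = -‖z‖ ^ 2 / (4 * (s * r)) := by
    rw [norm_inv, Real.norm_of_nonneg hq.le, inv_pow, hss]
    field_simp
  rw [he]
  congr 1
  have : s * ((Real.sqrt s)⁻¹ * (Real.sqrt s)⁻¹) = 1 := by
    rw [← mul_inv, ← pow_two, hss, mul_inv_cancel₀ hs.ne']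
  field_simp
  rw [hss]

theorem heatGrad_eq_smul (n : ℕ) {s : ℝ} (hs : 0 < s) (z : EuclideanSpace ℝ (Fin n)) :
    heatGrad n s z =
      (s ^ (-(n : ℝ) / 2) * s ^ (-(1 / 2) : ℝ)) • heatGrad n 1 ((Real.sqrt s)⁻¹ • z) := by
  simpa using heatGrad_mul n hs one_pos z

theorem integral_comp_inv_sqrt_smul (n : ℕ) {s : ℝ} (hs : 0 < s)
    (f : EuclideanSpace ℝ (Fin n) → ℝ) :
    ∫ z, s ^ (-(n : ℝ) / 2) * s ^ (-(1 / 2) : ℝ) * f ((Real.sqrt s)⁻¹ • z) =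
      s ^ (-(1 / 2) : ℝ) * ∫ z, f z := by
  rw [integral_const_mul, Measure.integral_comp_inv_smul, finrank_euclideanSpace, Fintype.card_fin,
    abs_of_nonneg (by positivity), smul_eq_mul, Real.sqrt_eq_rpow, ← Real.rpow_natCast,
    ← Real.rpow_mul hs.le]
  have : s ^ (-(n : ℝ) / 2) * s ^ (1 / 2 * (n : ℝ)) = 1 := by
    rw [← Real.rpow_add hs]
    ring_nf
    simp
  linear_combination (s ^ (-(1 / 2) : ℝ) * ∫ z, f z) * this

theorem integrable_exp_neg_sq_norm (n : ℕ) :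
    Integrable fun w : EuclideanSpace ℝ (Fin n) => Real.exp (-‖w‖ ^ 2 / 16) := by
  have h := GaussianFourier.integral_rexp_neg_mul_sq_norm (V := EuclideanSpace ℝ (Fin n))
    (b := 1 / 16) (by norm_num)
  refine (Integrable.of_integral_ne_zero (f := fun w : EuclideanSpace ℝ (Fin n) =>
    Real.exp (-(1 / 16) * ‖w‖ ^ 2)) ?_).congr (Filter.Eventually.of_forall fun w => ?_)
  · rw [h]; positivity
  · simp only
    congr 1
    ring

theorem one_add_sq_mul_exp_le (X : ℝ) (hX : 0 ≤ X) :
    (1 + X) ^ 2 * Real.exp (-X / 8) ≤ 1024 * Real.exp (-X / 16) := by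
  have h1 : (1 + X) / 32 ≤ Real.exp (X / 32) := by
    have := Real.add_one_le_exp (X / 32)
    linarith
  have h2 : (1 + X) ^ 2 ≤ 1024 * Real.exp (X / 16) := by
    have h3 : ((1 + X) / 32) ^ 2 ≤ Real.exp (X / 32) ^ 2 := by gcongr
    have h4 : Real.exp (X / 32) ^ 2 = Real.exp (X / 16) := by
      rw [← Real.exp_nat_mul]; congr 1; push_cast; ring
    rw [h4] at h3
    linarith
  calc _ ≤ 1024 * Real.exp (X / 16) * Real.exp (-X / 8) := by gcongr
    _ = _ := by rw [mul_assoc, ← Real.exp_add]; congr 2; ring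

theorem abs_exp_neg_sub_exp_neg_le {p q m : ℝ} (hp : m ≤ p) (hq : m ≤ q) :
    |Real.exp (-p) - Real.exp (-q)| ≤ Real.exp (-m) * |p - q| := by
  wlog h : p ≤ q generalizing p q
  · rw [abs_sub_comm, abs_sub_comm p]
    exact this hq hp (le_of_not_ge h)
  have h1 : Real.exp (-q) ≤ Real.exp (-p) := by gcongr
  rw [abs_of_nonneg (by linarith), abs_sub_comm, abs_of_nonneg (by linarith)]
  have h2 : Real.exp (-q) = Real.exp (-p) * Real.exp (-(q - p)) := by
    rw [← Real.exp_add]; congr 1; ring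
  have h3 := Real.add_one_le_exp (-(q - p))
  have h4 : Real.exp (-p) ≤ Real.exp (-m) := by gcongr
  calc _ = Real.exp (-p) * (1 - Real.exp (-(q - p))) := by rw [h2]; ring
    _ ≤ Real.exp (-p) * (q - p) :=
      mul_le_mul_of_nonneg_left (by linarith) (Real.exp_pos _).le
    _ ≤ _ := mul_le_mul_of_nonneg_right h4 (by linarith)

/-- The normalising constant `(4π)^{-n/2} / 2` of the heat kernel gradient at time `1`. -/
def heatGradCoeff (n : ℕ) : ℝ := (4 * Real.pi) ^ (-(n : ℝ) / 2) / 2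

theorem heatGradCoeff_pos (n : ℕ) : 0 < heatGradCoeff n := by
  unfold heatGradCoeff
  positivity

theorem heatGrad_eq_coeff (n : ℕ) {r : ℝ} (hr : 0 < r) (w : EuclideanSpace ℝ (Fin n)) :
    heatGrad n r w =
      -(heatGradCoeff n * r ^ (-((n : ℝ) / 2 + 1)) * Real.exp (-(‖w‖ ^ 2 / (4 * r)))) • w := by
  have h : r ^ (-((n : ℝ) / 2 + 1)) = r ^ (-(n : ℝ) / 2) * r⁻¹ := by
    rw [← Real.rpow_neg_one r, ← Real.rpow_add hr]
    congr 1
    ring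
  rw [heatGrad, heatKernel, heatGradCoeff, h, Real.mul_rpow (by positivity) hr.le, neg_div (4 * r)]
  congr 1
  field_simp

theorem heatGrad_one (n : ℕ) (w : EuclideanSpace ℝ (Fin n)) :
    heatGrad n 1 w = -(heatGradCoeff n * Real.exp (-(‖w‖ ^ 2 / 4))) • w := by
  simp [heatGrad_eq_coeff n one_pos w]

theorem norm_heatGrad_one_le (n : ℕ) (w : EuclideanSpace ℝ (Fin n)) :
    ‖heatGrad n 1 w‖ ≤ heatGradCoeff n * 1024 * Real.exp (-‖w‖ ^ 2 / 16) := by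
  have ha := heatGradCoeff_pos n
  rw [heatGrad_one, norm_smul, norm_neg, Real.norm_of_nonneg (by positivity)]
  have h1 := one_add_sq_mul_exp_le (‖w‖ ^ 2) (by positivity)
  have h2 : ‖w‖ ≤ (1 + ‖w‖ ^ 2) ^ 2 := by nlinarith [norm_nonneg w, sq_nonneg (‖w‖ - 1)]
  have h3 : Real.exp (-(‖w‖ ^ 2 / 4)) ≤ Real.exp (-‖w‖ ^ 2 / 8) := by
    apply Real.exp_le_exp.2
    nlinarith [sq_nonneg ‖w‖]
  calc _ = heatGradCoeff n * (‖w‖ * Real.exp (-(‖w‖ ^ 2 / 4))) := by ring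
    _ ≤ heatGradCoeff n * ((1 + ‖w‖ ^ 2) ^ 2 * Real.exp (-‖w‖ ^ 2 / 8)) := by gcongr
    _ ≤ heatGradCoeff n * (1024 * Real.exp (-‖w‖ ^ 2 / 16)) := by gcongr
    _ = _ := by ring

theorem norm_heatGrad_one_add_sub_le (n : ℕ) {k : EuclideanSpace ℝ (Fin n)} (hk : ‖k‖ ≤ 1)
    (w : EuclideanSpace ℝ (Fin n)) :
    ‖heatGrad n 1 (w + k) - heatGrad n 1 w‖ ≤
      heatGradCoeff n * Real.exp (1 / 4) * 2048 * ‖k‖ * Real.exp (-‖w‖ ^ 2 / 16) := by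
  have ha := heatGradCoeff_pos n
  set X := ‖w‖ ^ 2 with hX
  have hw := norm_nonneg w
  have hk0 := norm_nonneg k
  have hsub : ‖w‖ ≤ ‖w + k‖ + ‖k‖ := by simpa using norm_sub_le (w + k) k
  have hadd : ‖w + k‖ ≤ ‖w‖ + ‖k‖ := norm_add_le w k
  have hwk := norm_nonneg (w + k)
  have hm1 : X / 8 - 1 / 4 ≤ ‖w + k‖ ^ 2 / 4 := by
    nlinarith [sq_nonneg (‖w + k‖ - ‖k‖)]
  have hm2 : X / 8 - 1 / 4 ≤ X / 4 := by nlinarith [sq_nonneg ‖w‖]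
  have hd : |‖w + k‖ ^ 2 / 4 - X / 4| ≤ ‖k‖ * (2 * ‖w‖ + 1) / 4 := by
    rw [abs_le]
    constructor <;> nlinarith
  have h1 := abs_exp_neg_sub_exp_neg_le hm1 hm2
  have h2 : Real.exp (-(‖w + k‖ ^ 2 / 4)) ≤ Real.exp (-(X / 8 - 1 / 4)) := by gcongr
  have h3 : Real.exp (-(X / 8 - 1 / 4)) = Real.exp (1 / 4) * Real.exp (-X / 8) := by
    rw [← Real.exp_add]
    congr 1
    ring
  have h4 := one_add_sq_mul_exp_le X (by positivity)
  have h5 : 1 + (2 * ‖w‖ + 1) / 4 * ‖w‖ ≤ 2 * (1 + X) ^ 2 := by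
    nlinarith [sq_nonneg (‖w‖ - 1), sq_nonneg X]
  rw [heatGrad_one, heatGrad_one]
  have heq : -(heatGradCoeff n * Real.exp (-(‖w + k‖ ^ 2 / 4))) • (w + k)
      - -(heatGradCoeff n * Real.exp (-(X / 4))) • w
      = -heatGradCoeff n • (Real.exp (-(‖w + k‖ ^ 2 / 4)) • k
        + (Real.exp (-(‖w + k‖ ^ 2 / 4)) - Real.exp (-(X / 4))) • w) := by
    module
  rw [heq, norm_smul, norm_neg, Real.norm_of_nonneg ha.le]
  have h6 : ‖Real.exp (-(‖w + k‖ ^ 2 / 4)) • k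
        + (Real.exp (-(‖w + k‖ ^ 2 / 4)) - Real.exp (-(X / 4))) • w‖
      ≤ Real.exp (1 / 4) * Real.exp (-X / 8) * ‖k‖
        + Real.exp (1 / 4) * Real.exp (-X / 8) * (‖k‖ * (2 * ‖w‖ + 1) / 4) * ‖w‖ := by
    refine (norm_add_le _ _).trans ?_
    rw [norm_smul, norm_smul, Real.norm_of_nonneg (Real.exp_pos _).le, Real.norm_eq_abs, ← h3]
    gcongr
    exact h1.trans (by gcongr)
  calc _ ≤ heatGradCoeff n * (Real.exp (1 / 4) * Real.exp (-X / 8) * ‖k‖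
        + Real.exp (1 / 4) * Real.exp (-X / 8) * (‖k‖ * (2 * ‖w‖ + 1) / 4) * ‖w‖) := by gcongr
    _ = heatGradCoeff n * Real.exp (1 / 4) * ‖k‖ *
        ((1 + (2 * ‖w‖ + 1) / 4 * ‖w‖) * Real.exp (-X / 8)) := by ring
    _ ≤ heatGradCoeff n * Real.exp (1 / 4) * ‖k‖ *
        (2 * (1 + X) ^ 2 * Real.exp (-X / 8)) := by gcongr
    _ = heatGradCoeff n * Real.exp (1 / 4) * ‖k‖ * (2 * ((1 + X) ^ 2 * Real.exp (-X / 8))) := by ring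
    _ ≤ heatGradCoeff n * Real.exp (1 / 4) * ‖k‖ * (2 * (1024 * Real.exp (-X / 16))) := by gcongr
    _ = _ := by ring

theorem norm_heatGrad_time_sub_le (n : ℕ) {δ : ℝ} (hδ : 0 ≤ δ) (hδ1 : δ ≤ 1)
    (w : EuclideanSpace ℝ (Fin n)) :
    ‖heatGrad n (1 + δ) w - heatGrad n 1 w‖ ≤
      heatGradCoeff n * ((n : ℝ) / 2 + 1) * 1024 * δ * Real.exp (-‖w‖ ^ 2 / 16) := by
  have ha := heatGradCoeff_pos n
  set X := ‖w‖ ^ 2 with hX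
  have hX0 : 0 ≤ X := by positivity
  have hw := norm_nonneg w
  set q : ℝ := (n : ℝ) / 2 + 1 with hq
  have hq1 : 1 ≤ q := by
    have : (0 : ℝ) ≤ n := n.cast_nonneg
    linarith
  have hr : 0 < 1 + δ := by linarith
  have hc1 : (1 + δ) ^ (-q) ≤ 1 := Real.rpow_le_one_of_one_le_of_nonpos (by linarith) (by linarith)
  have hc2 : 1 - q * δ ≤ (1 + δ) ^ (-q) := by
    rw [Real.rpow_def_of_pos hr]
    have h1 := Real.add_one_le_exp (Real.log (1 + δ) * -q)
    have h2 := Real.log_le_sub_one_of_pos hr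
    nlinarith
  have hc : |(1 + δ) ^ (-q) - 1| ≤ q * δ := by
    rw [abs_le]
    constructor <;> nlinarith
  have hm1 : X / 8 ≤ X / (4 * (1 + δ)) := by gcongr; linarith
  have hm2 : X / 8 ≤ X / 4 := by gcongr; norm_num
  have hd : |X / (4 * (1 + δ)) - X / 4| ≤ X / 4 * δ := by
    rw [abs_sub_comm, abs_of_nonneg]
    · rw [div_sub_div _ _ (by norm_num) (by positivity), div_le_iff₀ (by positivity)]
      nlinarith [mul_nonneg hX0 hδ, mul_nonneg (mul_nonneg hX0 hδ) hδ]
    · rw [sub_nonneg]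
      gcongr
      linarith
  have h1 := abs_exp_neg_sub_exp_neg_le hm1 hm2
  have h2 : Real.exp (-(X / 4)) ≤ Real.exp (-(X / 8)) := by gcongr
  have h4 := one_add_sq_mul_exp_le X hX0
  have h5 : (q + X / 4) * ‖w‖ ≤ q * (1 + X) ^ 2 := by
    have : (1 + X) * ‖w‖ ≤ (1 + X) ^ 2 := by
      rw [pow_two]
      gcongr
      nlinarith [sq_nonneg (‖w‖ - 1)]
    have h6 : q + X / 4 ≤ q * (1 + X) := by nlinarith
    calc _ ≤ q * (1 + X) * ‖w‖ := by gcongr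
      _ = q * ((1 + X) * ‖w‖) := by ring
      _ ≤ _ := by gcongr
  rw [heatGrad_eq_coeff n hr, heatGrad_one]
  have heq : -(heatGradCoeff n * (1 + δ) ^ (-q) * Real.exp (-(X / (4 * (1 + δ))))) • w
      - -(heatGradCoeff n * Real.exp (-(X / 4))) • w
      = -(heatGradCoeff n * ((1 + δ) ^ (-q) * (Real.exp (-(X / (4 * (1 + δ)))) - Real.exp (-(X / 4)))
        + ((1 + δ) ^ (-q) - 1) * Real.exp (-(X / 4)))) • w := by
    module
  rw [heq, norm_smul, norm_neg, norm_mul, Real.norm_of_nonneg ha.le, Real.norm_eq_abs]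
  have h6 : |(1 + δ) ^ (-q) * (Real.exp (-(X / (4 * (1 + δ)))) - Real.exp (-(X / 4)))
        + ((1 + δ) ^ (-q) - 1) * Real.exp (-(X / 4))|
      ≤ 1 * (Real.exp (-(X / 8)) * (X / 4 * δ)) + q * δ * Real.exp (-(X / 8)) := by
    refine (abs_add_le _ _).trans ?_
    rw [abs_mul, abs_mul, abs_of_pos (Real.exp_pos (-(X / 4))), abs_of_nonneg (by positivity)]
    gcongr
    exact h1.trans (by gcongr)
  have h3 : Real.exp (-(X / 8)) = Real.exp (-X / 8) := by rw [neg_div]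
  rw [h3] at h6
  calc _ ≤ heatGradCoeff n * (1 * (Real.exp (-X / 8) * (X / 4 * δ))
          + q * δ * Real.exp (-X / 8)) * ‖w‖ := by gcongr
    _ = heatGradCoeff n * δ * ((q + X / 4) * ‖w‖ * Real.exp (-X / 8)) := by ring
    _ ≤ heatGradCoeff n * δ * (q * (1 + X) ^ 2 * Real.exp (-X / 8)) := by gcongr
    _ = heatGradCoeff n * δ * q * ((1 + X) ^ 2 * Real.exp (-X / 8)) := by ring
    _ ≤ heatGradCoeff n * δ * q * (1024 * Real.exp (-X / 16)) := by gcongr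
    _ = _ := by ring

theorem measurable_heatGrad_right (n : ℕ) (s : ℝ) : Measurable (heatGrad n s) :=
  (measurable_heatGrad n).comp measurable_prodMk_left

theorem integrable_heatGrad_one (n : ℕ) : Integrable (heatGrad n 1) :=
  ((integrable_exp_neg_sq_norm n).const_mul _).mono'
    (measurable_heatGrad_right n 1).aestronglyMeasurable
    (Filter.Eventually.of_forall (norm_heatGrad_one_le n))

theorem integrable_heatGrad (n : ℕ) {s : ℝ} (hs : 0 < s) : Integrable (heatGrad n s) := by
  have h : heatGrad n s = fun z => (s ^ (-(n : ℝ) / 2) * s ^ (-(1 / 2) : ℝ)) •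
      heatGrad n 1 ((Real.sqrt s)⁻¹ • z) := funext (heatGrad_eq_smul n hs)
  rw [h]
  exact ((integrable_heatGrad_one n).comp_smul (inv_ne_zero (Real.sqrt_pos.2 hs).ne')).smul
    (s ^ (-(n : ℝ) / 2) * s ^ (-(1 / 2) : ℝ))

theorem integral_norm_heatGrad (n : ℕ) {s : ℝ} (hs : 0 < s) :
    ∫ z, ‖heatGrad n s z‖ = s ^ (-(1 / 2) : ℝ) * ∫ z, ‖heatGrad n 1 z‖ := by
  rw [← integral_comp_inv_sqrt_smul n hs]
  congr 1
  ext z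
  rw [heatGrad_eq_smul n hs, norm_smul, Real.norm_of_nonneg (by positivity)]

theorem integral_norm_heatGrad_add_sub (n : ℕ) {s : ℝ} (hs : 0 < s)
    (h : EuclideanSpace ℝ (Fin n)) :
    ∫ z, ‖heatGrad n s (z + h) - heatGrad n s z‖ = s ^ (-(1 / 2) : ℝ) *
      ∫ z, ‖heatGrad n 1 (z + (Real.sqrt s)⁻¹ • h) - heatGrad n 1 z‖ := by
  rw [← integral_comp_inv_sqrt_smul n hs]
  congr 1
  ext z
  rw [heatGrad_eq_smul n hs, heatGrad_eq_smul n hs z, ← smul_sub, norm_smul, smul_add,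
    Real.norm_of_nonneg (by positivity)]

theorem integral_norm_heatGrad_time_sub (n : ℕ) {s d : ℝ} (hs : 0 < s) (hd : 0 ≤ d) :
    ∫ z, ‖heatGrad n (s + d) z - heatGrad n s z‖ = s ^ (-(1 / 2) : ℝ) *
      ∫ z, ‖heatGrad n (1 + d / s) z - heatGrad n 1 z‖ := by
  rw [← integral_comp_inv_sqrt_smul n hs]
  congr 1
  ext z
  have h1 : s + d = s * (1 + d / s) := by field_simp
  rw [h1, heatGrad_mul n hs (by positivity), heatGrad_eq_smul n hs z, ← smul_sub, norm_smul,
    Real.norm_of_nonneg (by positivity)]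

theorem exists_integral_norm_heatGrad_one_add_sub_le (n : ℕ) {α : ℝ} (hα : α ∈ Set.Ioo (0 : ℝ) 1) :
    ∃ c : ℝ, 0 ≤ c ∧ ∀ h : EuclideanSpace ℝ (Fin n),
      ∫ z, ‖heatGrad n 1 (z + h) - heatGrad n 1 z‖ ≤ c * ‖h‖ ^ α := by
  have hi := integrable_exp_neg_sq_norm n
  set I := ∫ w : EuclideanSpace ℝ (Fin n), Real.exp (-‖w‖ ^ 2 / 16)
  have hI : 0 ≤ I := integral_nonneg fun w => (Real.exp_pos _).le
  set N := ∫ w, ‖heatGrad n 1 w‖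
  have hN : 0 ≤ N := integral_nonneg fun w => norm_nonneg _
  have ha := heatGradCoeff_pos n
  have hg := integrable_heatGrad_one n
  obtain ⟨c, hc, hpt⟩ : ∃ c : ℝ, 0 < c ∧ ∀ k : EuclideanSpace ℝ (Fin n), ‖k‖ ≤ 1 → ∀ w,
      ‖heatGrad n 1 (w + k) - heatGrad n 1 w‖ ≤ c * ‖k‖ * Real.exp (-‖w‖ ^ 2 / 16) :=
    ⟨_, by positivity, fun k hk => norm_heatGrad_one_add_sub_le n hk⟩
  have hcI : 0 ≤ c * I + 2 * N := by positivity
  refine ⟨c * I + 2 * N, hcI, fun h => ?_⟩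
  have hint : Integrable fun z => ‖heatGrad n 1 (z + h) - heatGrad n 1 z‖ :=
    ((hg.comp_add_right h).sub hg).norm
  have hp : 0 ≤ ‖h‖ ^ α := by positivity
  rcases le_total ‖h‖ 1 with h1 | h1
  · calc _ ≤ ∫ w : EuclideanSpace ℝ (Fin n), c * ‖h‖ * Real.exp (-‖w‖ ^ 2 / 16) :=
          integral_mono hint (hi.const_mul _) (hpt h h1)
      _ = c * ‖h‖ * I := integral_const_mul _ _
      _ ≤ c * ‖h‖ ^ α * I := by
        gcongr
        exact Real.self_le_rpow_of_le_one (norm_nonneg _) h1 hα.2.le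
      _ ≤ _ := by nlinarith [mul_nonneg hN hp]
  · calc _ ≤ ∫ w, (‖heatGrad n 1 (w + h)‖ + ‖heatGrad n 1 w‖) :=
          integral_mono hint ((hg.comp_add_right h).norm.add hg.norm) fun w => norm_sub_le _ _
      _ = N + N := by
        rw [integral_add (hg.comp_add_right h).norm hg.norm,
          integral_add_right_eq_self (fun w => ‖heatGrad n 1 w‖)]
      _ ≤ (c * I + 2 * N) * 1 := by nlinarith [mul_nonneg hc.le hI]
      _ ≤ _ := mul_le_mul_of_nonneg_left (Real.one_le_rpow h1 hα.1.le) hcI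

theorem exists_integral_norm_heatGrad_one_time_sub_le (n : ℕ) {α : ℝ}
    (hα : α ∈ Set.Ioo (0 : ℝ) 1) :
    ∃ c : ℝ, 0 ≤ c ∧ ∀ δ : ℝ, 0 ≤ δ →
      ∫ z, ‖heatGrad n (1 + δ) z - heatGrad n 1 z‖ ≤ c * δ ^ (α / 2) := by
  have hi := integrable_exp_neg_sq_norm n
  set I := ∫ w : EuclideanSpace ℝ (Fin n), Real.exp (-‖w‖ ^ 2 / 16)
  have hI : 0 ≤ I := integral_nonneg fun w => (Real.exp_pos _).le
  set N := ∫ w, ‖heatGrad n 1 w‖ with hN'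
  have hN : 0 ≤ N := integral_nonneg fun w => norm_nonneg _
  have ha := heatGradCoeff_pos n
  have hg := integrable_heatGrad_one n
  set c := heatGradCoeff n * ((n : ℝ) / 2 + 1) * 1024
  have hc : 0 < c := by positivity
  refine ⟨c * I + 2 * N, by positivity, fun δ hδ => ?_⟩
  have hg' := integrable_heatGrad n (s := 1 + δ) (by positivity)
  have hint : Integrable fun z => ‖heatGrad n (1 + δ) z - heatGrad n 1 z‖ := (hg'.sub hg).norm
  have hp : 0 ≤ δ ^ (α / 2) := by positivity
  have hα1 := hα.1
  have hα2 := hα.2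
  rcases le_total δ 1 with h1 | h1
  · calc _ ≤ ∫ w : EuclideanSpace ℝ (Fin n), c * δ * Real.exp (-‖w‖ ^ 2 / 16) :=
          integral_mono hint (hi.const_mul _) (norm_heatGrad_time_sub_le n hδ h1)
      _ = c * δ * I := integral_const_mul _ _
      _ ≤ c * δ ^ (α / 2) * I := by
        gcongr
        exact Real.self_le_rpow_of_le_one hδ h1 (by linarith)
      _ ≤ _ := by nlinarith [mul_nonneg hN hp]
  · calc _ ≤ ∫ w, (‖heatGrad n (1 + δ) w‖ + ‖heatGrad n 1 w‖) :=
          integral_mono hint (hg'.norm.add hg.norm) fun w => norm_sub_le _ _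
      _ = (1 + δ) ^ (-(1 / 2) : ℝ) * N + N := by
        rw [integral_add hg'.norm hg.norm, integral_norm_heatGrad n (by positivity)]
      _ ≤ 1 * N + N := by
        gcongr
        exact Real.rpow_le_one_of_one_le_of_nonpos (by linarith) (by norm_num)
      _ ≤ (c * I + 2 * N) * 1 := by nlinarith [mul_nonneg hc.le hI]
      _ ≤ _ := by
        gcongr
        exact Real.one_le_rpow h1 (by linarith)

theorem integrableOn_sub_rpow {a t r : ℝ} (hat : a ≤ t) (hr : -1 < r) :
    IntegrableOn (fun τ => (t - τ) ^ r) (Set.Ioc a t) := by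
  have h := (intervalIntegral.intervalIntegrable_rpow' (a := t - a) (b := 0) hr).comp_sub_left t
  rw [← intervalIntegrable_iff_integrableOn_Ioc_of_le hat]
  simpa using h

theorem integral_sub_rpow {a t r : ℝ} (hat : a ≤ t) (hr : -1 < r) :
    ∫ τ in Set.Ioc a t, (t - τ) ^ r = (t - a) ^ (r + 1) / (r + 1) := by
  rw [← intervalIntegral.integral_of_le hat,
    intervalIntegral.integral_comp_sub_left (fun τ => τ ^ r), integral_rpow (Or.inl hr), sub_self,
    Real.zero_rpow (by linarith), sub_zero]

theorem integrable_inner_comp_sub {n : ℕ}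
    {F β : EuclideanSpace ℝ (Fin n) → EuclideanSpace ℝ (Fin n)} {M : ℝ} (hF : Integrable F)
    (hβ : Measurable β) (hM : ∀ y, ‖β y‖ ≤ M) (x : EuclideanSpace ℝ (Fin n)) :
    Integrable fun y => ⟪F (x - y), β y⟫ := by
  have h := hF.comp_sub_left x
  refine (h.norm.mul_const M).mono' (h.aestronglyMeasurable.inner hβ.aestronglyMeasurable)
    (Filter.Eventually.of_forall fun y => ?_)
  exact (norm_inner_le_norm _ _).trans (mul_le_mul_of_nonneg_left (hM y) (norm_nonneg _))

theorem abs_integral_inner_comp_sub_le {n : ℕ}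
    {F β : EuclideanSpace ℝ (Fin n) → EuclideanSpace ℝ (Fin n)} {M : ℝ} (hF : Integrable F)
    (hM : ∀ y, ‖β y‖ ≤ M) (x : EuclideanSpace ℝ (Fin n)) :
    |∫ y, ⟪F (x - y), β y⟫| ≤ (∫ z, ‖F z‖) * M := by
  have h := hF.comp_sub_left x
  rw [← integral_sub_left_eq_self (fun z => ‖F z‖) volume x, ← integral_mul_const,
    ← Real.norm_eq_abs]
  refine norm_integral_le_of_norm_le (h.norm.mul_const M)
    (Filter.Eventually.of_forall fun y => ?_)
  exact (norm_inner_le_norm _ _).trans (mul_le_mul_of_nonneg_left (hM y) (norm_nonneg _))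

/-- The spatial convolution `∫ ∇Γ(s, x - y) · β(y) dy`. -/
def heatGradConv (n : ℕ) (s : ℝ) (β : EuclideanSpace ℝ (Fin n) → EuclideanSpace ℝ (Fin n))
    (x : EuclideanSpace ℝ (Fin n)) : ℝ :=
  ∫ y, ⟪heatGrad n s (x - y), β y⟫

theorem abs_heatGradConv_le {n : ℕ} {s : ℝ} (hs : 0 < s)
    {β : EuclideanSpace ℝ (Fin n) → EuclideanSpace ℝ (Fin n)} {M : ℝ}
    (hM : ∀ y, ‖β y‖ ≤ M) (x : EuclideanSpace ℝ (Fin n)) :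
    |heatGradConv n s β x| ≤ (∫ z, ‖heatGrad n 1 z‖) * M * s ^ (-(1 / 2) : ℝ) := by
  refine (abs_integral_inner_comp_sub_le (integrable_heatGrad n hs) hM x).trans_eq ?_
  rw [integral_norm_heatGrad n hs]
  ring

theorem abs_heatGradConv_sub_le {n : ℕ} {s α c : ℝ} (hs : 0 < s)
    (hc : ∀ h : EuclideanSpace ℝ (Fin n),
      ∫ z, ‖heatGrad n 1 (z + h) - heatGrad n 1 z‖ ≤ c * ‖h‖ ^ α)
    {β : EuclideanSpace ℝ (Fin n) → EuclideanSpace ℝ (Fin n)} {M : ℝ} (hβ : Measurable β)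
    (hM : ∀ y, ‖β y‖ ≤ M) (x x' : EuclideanSpace ℝ (Fin n)) :
    |heatGradConv n s β x' - heatGradConv n s β x| ≤
      c * M * ‖x' - x‖ ^ α * s ^ (-((1 + α) / 2)) := by
  have hM0 : 0 ≤ M := (norm_nonneg _).trans (hM 0)
  have hg := integrable_heatGrad n hs
  have h1 : heatGradConv n s β x' - heatGradConv n s β x =
      ∫ y, ⟪heatGrad n s (x - y + (x' - x)) - heatGrad n s (x - y), β y⟫ := by
    rw [heatGradConv, heatGradConv, ← integral_sub (integrable_inner_comp_sub hg hβ hM x')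
      (integrable_inner_comp_sub hg hβ hM x)]
    congr 1
    ext y
    rw [inner_sub_left, show x - y + (x' - x) = x' - y by abel]
  rw [h1]
  refine (abs_integral_inner_comp_sub_le
    (F := fun z => heatGrad n s (z + (x' - x)) - heatGrad n s z)
    ((hg.comp_add_right (x' - x)).sub hg) hM x).trans ?_
  rw [integral_norm_heatGrad_add_sub n hs]
  have h2 := hc ((Real.sqrt s)⁻¹ • (x' - x))
  have h3 : s ^ (-(1 / 2) : ℝ) * ‖(Real.sqrt s)⁻¹ • (x' - x)‖ ^ α =
      ‖x' - x‖ ^ α * s ^ (-((1 + α) / 2)) := by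
    rw [norm_smul, norm_inv, Real.norm_of_nonneg (Real.sqrt_nonneg s), Real.sqrt_eq_rpow,
      ← Real.rpow_neg hs.le, Real.mul_rpow (by positivity) (norm_nonneg _), ← Real.rpow_mul hs.le,
      ← mul_assoc, ← Real.rpow_add hs, mul_comm]
    congr 2
    ring
  calc _ ≤ s ^ (-(1 / 2) : ℝ) * (c * ‖(Real.sqrt s)⁻¹ • (x' - x)‖ ^ α) * M := by gcongr
    _ = c * M * (s ^ (-(1 / 2) : ℝ) * ‖(Real.sqrt s)⁻¹ • (x' - x)‖ ^ α) := by ring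
    _ = _ := by rw [h3]; ring

theorem abs_heatGradConv_time_sub_le {n : ℕ} {s d α c : ℝ} (hs : 0 < s) (hd : 0 ≤ d)
    (hc : ∀ δ : ℝ, 0 ≤ δ →
      ∫ z, ‖heatGrad n (1 + δ) z - heatGrad n 1 z‖ ≤ c * δ ^ (α / 2))
    {β : EuclideanSpace ℝ (Fin n) → EuclideanSpace ℝ (Fin n)} {M : ℝ} (hβ : Measurable β)
    (hM : ∀ y, ‖β y‖ ≤ M) (x : EuclideanSpace ℝ (Fin n)) :
    |heatGradConv n (s + d) β x - heatGradConv n s β x| ≤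
      c * M * d ^ (α / 2) * s ^ (-((1 + α) / 2)) := by
  have hM0 : 0 ≤ M := (norm_nonneg _).trans (hM 0)
  have hg := integrable_heatGrad n hs
  have hg' := integrable_heatGrad n (s := s + d) (by positivity)
  have h1 : heatGradConv n (s + d) β x - heatGradConv n s β x =
      ∫ y, ⟪heatGrad n (s + d) (x - y) - heatGrad n s (x - y), β y⟫ := by
    rw [heatGradConv, heatGradConv, ← integral_sub (integrable_inner_comp_sub hg' hβ hM x)
      (integrable_inner_comp_sub hg hβ hM x)]
    congr 1
    ext y
    rw [inner_sub_left]
  rw [h1]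
  refine (abs_integral_inner_comp_sub_le
    (F := fun z => heatGrad n (s + d) z - heatGrad n s z) (hg'.sub hg) hM x).trans ?_
  rw [integral_norm_heatGrad_time_sub n hs hd]
  have h2 := hc (d / s) (by positivity)
  have h3 : s ^ (-(1 / 2) : ℝ) * (d / s) ^ (α / 2) = d ^ (α / 2) * s ^ (-((1 + α) / 2)) := by
    rw [Real.div_rpow hd hs.le, div_eq_mul_inv (d ^ (α / 2)), ← Real.rpow_neg hs.le, mul_left_comm,
      ← Real.rpow_add hs]
    congr 2
    ring
  calc _ ≤ s ^ (-(1 / 2) : ℝ) * (c * (d / s) ^ (α / 2)) * M := by gcongr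
    _ = c * M * (s ^ (-(1 / 2) : ℝ) * (d / s) ^ (α / 2)) := by ring
    _ = _ := by rw [h3]; ring

theorem stronglyMeasurable_heatGradConv {n : ℕ}
    {b : ℝ → EuclideanSpace ℝ (Fin n) → EuclideanSpace ℝ (Fin n)}
    (hb : Measurable fun q : ℝ × EuclideanSpace ℝ (Fin n) => b q.1 q.2) (t : ℝ)
    (x : EuclideanSpace ℝ (Fin n)) :
    StronglyMeasurable fun τ => heatGradConv n (t - τ) (b τ) x := by
  unfold heatGradConv
  apply StronglyMeasurable.integral_prod_right
  apply Measurable.stronglyMeasurable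
  have h : Measurable fun p : ℝ × EuclideanSpace ℝ (Fin n) => heatGrad n (t - p.1) (x - p.2) :=
    (measurable_heatGrad n).comp (f := fun p : ℝ × EuclideanSpace ℝ (Fin n) => (t - p.1, x - p.2))
      (by fun_prop)
  exact h.inner hb

theorem ae_restrict_Ioc_mem_Ioo (a t : ℝ) :
    ∀ᵐ τ ∂(volume.restrict (Set.Ioc a t)), τ ∈ Set.Ioo a t := by
  rw [← restrict_Ioo_eq_restrict_Ioc]
  exact ae_restrict_mem measurableSet_Ioo

theorem abs_integral_le_of_abs_le_sub_rpow {f : ℝ → ℝ} {a t r K : ℝ} (hat : a ≤ t) (hr : -1 < r)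
    (hf : ∀ τ ∈ Set.Ioo a t, |f τ| ≤ K * (t - τ) ^ r) :
    |∫ τ in Set.Ioc a t, f τ| ≤ K * ((t - a) ^ (r + 1) / (r + 1)) := by
  rw [← integral_sub_rpow hat hr, ← integral_const_mul]
  exact norm_integral_le_of_norm_le (f := f) ((integrableOn_sub_rpow hat hr).const_mul K)
    ((ae_restrict_Ioc_mem_Ioo a t).mono fun τ hτ => hf τ hτ)

theorem integrableOn_heatGradConv {n : ℕ}
    {b : ℝ → EuclideanSpace ℝ (Fin n) → EuclideanSpace ℝ (Fin n)}
    (hb : Measurable fun q : ℝ × EuclideanSpace ℝ (Fin n) => b q.1 q.2) {M t : ℝ} (ht : 0 ≤ t)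
    (hM : ∀ τ ∈ Set.Ioo 0 t, ∀ y, ‖b τ y‖ ≤ M) (x : EuclideanSpace ℝ (Fin n)) :
    IntegrableOn (fun τ => heatGradConv n (t - τ) (b τ) x) (Set.Ioc 0 t) :=
  ((integrableOn_sub_rpow ht (r := (-(1 / 2) : ℝ)) (by norm_num)).const_mul
    ((∫ z, ‖heatGrad n 1 z‖) * M)).mono'
    (stronglyMeasurable_heatGradConv hb t x).aestronglyMeasurable
    ((ae_restrict_Ioc_mem_Ioo 0 t).mono fun τ hτ =>
      abs_heatGradConv_le (sub_pos.2 hτ.2) (hM τ hτ) x)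

/-- **Estimates for the Duhamel term with a gradient (divergence-form) source `b`**:
with `v(t,x) = ∫₀^t ∫ ∇Γ(t-τ, x-y)·b(τ,y) dy dτ`, one has the sup, spatial Hölder
and time Hölder bounds (i)–(iii). -/
theorem statement12 (n : ℕ) (hn : 1 ≤ n) (α : ℝ) (hα : α ∈ Set.Ioo (0 : ℝ) 1) :
    ∃ C : ℝ, 0 < C ∧
      ∀ T : ℝ, 0 < T →
      ∀ b : ℝ → EuclideanSpace ℝ (Fin n) → EuclideanSpace ℝ (Fin n),
        Measurable (fun q : ℝ × EuclideanSpace ℝ (Fin n) => b q.1 q.2) →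
      ∀ M : ℝ, (∀ τ ∈ Set.Icc (0 : ℝ) T, ∀ y, ‖b τ y‖ ≤ M) →
      ∀ v : ℝ → EuclideanSpace ℝ (Fin n) → ℝ,
        (∀ t x, v t x = ∫ τ in Set.Ioc (0 : ℝ) t, ∫ y,
          ⟪gradient (heatKernel n (t - τ)) (x - y), b τ y⟫) →
        (∀ t : ℝ, 0 < t → t ≤ T → ∀ x, |v t x| ≤ C * t ^ ((1 : ℝ) / 2) * M) ∧
        (∀ t : ℝ, 0 < t → t ≤ T → ∀ x x',
          |v t x' - v t x| ≤ C * T ^ ((1 - α) / 2) * ‖x' - x‖ ^ α * M) ∧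
        (∀ t t' : ℝ, 0 ≤ t → t < t' → t' ≤ T → ∀ x,
          |v t' x - v t x| ≤ C * T ^ ((1 - α) / 2) * (t' - t) ^ (α / 2) * M) := by
  have hα1 := hα.1
  have hα2 := hα.2
  obtain ⟨c₁, hc₁0, hc₁⟩ := exists_integral_norm_heatGrad_one_add_sub_le n hα
  obtain ⟨c₂, hc₂0, hc₂⟩ := exists_integral_norm_heatGrad_one_time_sub_le n hα
  set N := ∫ z, ‖heatGrad n 1 z‖ with hN
  have hN0 : 0 ≤ N := integral_nonneg fun _ => norm_nonneg _
  set p := (1 - α) / 2 with hp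
  have hp0 : 0 < p := by linarith
  have hrp : -((1 + α) / 2) + 1 = p := by ring
  have hr : -1 < -((1 + α) / 2) := by linarith
  have h12 : (-(1 / 2) : ℝ) + 1 = 1 / 2 := by norm_num
  have hd₁ : 0 ≤ c₁ / p := by positivity
  have hd₂ : 0 ≤ c₂ / p := by positivity
  obtain ⟨C, hC⟩ : ∃ C, C = 2 * N + c₁ / p + c₂ / p + 1 := ⟨_, rfl⟩
  refine ⟨C, by rw [hC]; positivity, ?_⟩
  intro T hT b hb M hM v hv
  have hM0 : 0 ≤ M := (norm_nonneg _).trans (hM 0 ⟨le_rfl, hT.le⟩ 0)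
  have hM' : ∀ t ≤ T, ∀ τ ∈ Set.Ioo 0 t, ∀ y, ‖b τ y‖ ≤ M := fun t ht τ hτ =>
    hM τ ⟨hτ.1.le, hτ.2.le.trans ht⟩
  have hbτ : ∀ τ, Measurable (b τ) := fun τ => hb.comp measurable_prodMk_left
  have hv' : ∀ t x, v t x = ∫ τ in Set.Ioc (0 : ℝ) t, heatGradConv n (t - τ) (b τ) x := by
    intro t x
    rw [hv]
    refine integral_congr_ae ((ae_restrict_Ioc_mem_Ioo 0 t).mono fun τ hτ => ?_)
    simp only [gradient_heatKernel n (sub_pos.2 hτ.2), heatGradConv]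
  refine ⟨fun t ht htT x => ?_, fun t ht htT x x' => ?_, fun t t' ht htt ht'T x => ?_⟩
  · rw [hv']
    refine (abs_integral_le_of_abs_le_sub_rpow ht.le (by norm_num) fun τ hτ =>
      abs_heatGradConv_le (sub_pos.2 hτ.2) (hM' t htT τ hτ) x).trans ?_
    rw [h12, sub_zero]
    calc _ = 2 * N * t ^ ((1 : ℝ) / 2) * M := by ring
      _ ≤ _ := by
        gcongr
        linarith
  · rw [hv', hv', ← integral_sub (integrableOn_heatGradConv hb ht.le (hM' t htT) x')
      (integrableOn_heatGradConv hb ht.le (hM' t htT) x)]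
    refine (abs_integral_le_of_abs_le_sub_rpow ht.le hr fun τ hτ =>
      abs_heatGradConv_sub_le (sub_pos.2 hτ.2) hc₁ (hbτ τ) (hM' t htT τ hτ) x x').trans ?_
    rw [hrp, sub_zero]
    calc _ = c₁ / p * t ^ p * ‖x' - x‖ ^ α * M := by ring
      _ ≤ _ := by
        gcongr <;> linarith
  · have hd : 0 < t' - t := sub_pos.2 htt
    have htT : t ≤ T := htt.le.trans ht'T
    have hi' := integrableOn_heatGradConv hb (ht.trans htt.le) (hM' t' ht'T) x
    have hi := integrableOn_heatGradConv hb ht (hM' t htT) x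
    have hi1 := hi'.mono_set (Set.Ioc_subset_Ioc_right htt.le)
    have hi2 := hi'.mono_set (Set.Ioc_subset_Ioc_left ht)
    have hsplit : v t' x - v t x =
        (∫ τ in Set.Ioc 0 t, (heatGradConv n (t' - τ) (b τ) x - heatGradConv n (t - τ) (b τ) x))
          + ∫ τ in Set.Ioc t t', heatGradConv n (t' - τ) (b τ) x := by
      rw [hv', hv', integral_sub hi1 hi, ← Set.Ioc_union_Ioc_eq_Ioc ht htt.le,
        setIntegral_union (Set.Ioc_disjoint_Ioc_of_le le_rfl) measurableSet_Ioc hi1 hi2]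
      ring
    have hA := abs_integral_le_of_abs_le_sub_rpow
      (f := fun τ => heatGradConv n (t' - τ) (b τ) x - heatGradConv n (t - τ) (b τ) x)
      (K := c₂ * M * (t' - t) ^ (α / 2)) ht hr fun τ hτ => by
        have := abs_heatGradConv_time_sub_le (sub_pos.2 hτ.2) hd.le hc₂ (hbτ τ)
          (hM' t htT τ hτ) x
        rwa [show t - τ + (t' - t) = t' - τ by ring] at this
    have hB := abs_integral_le_of_abs_le_sub_rpow (r := (-(1 / 2) : ℝ)) htt.le (by norm_num)
      fun τ hτ => abs_heatGradConv_le (sub_pos.2 hτ.2)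
        (hM' t' ht'T τ ⟨ht.trans_lt hτ.1, hτ.2⟩) x
    rw [hrp, sub_zero] at hA
    rw [h12] at hB
    have hdp : (t' - t) ^ ((1 : ℝ) / 2) ≤ T ^ p * (t' - t) ^ (α / 2) := by
      have : (t' - t) ^ ((1 : ℝ) / 2) = (t' - t) ^ p * (t' - t) ^ (α / 2) := by
        rw [← Real.rpow_add hd]
        congr 1
        ring
      rw [this]
      gcongr
      linarith
    have htp : t ^ p ≤ T ^ p := by gcongr
    rw [hsplit]
    calc _ ≤ _ := (abs_add_le _ _).trans (add_le_add hA hB)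
      _ = c₂ / p * t ^ p * (t' - t) ^ (α / 2) * M + 2 * N * (t' - t) ^ ((1 : ℝ) / 2) * M := by ring
      _ ≤ c₂ / p * T ^ p * (t' - t) ^ (α / 2) * M
          + 2 * N * (T ^ p * (t' - t) ^ (α / 2)) * M := by gcongr
      _ = (2 * N + c₂ / p) * T ^ p * (t' - t) ^ (α / 2) * M := by ring
      _ ≤ _ := by
        gcongr
        linarith
end
end

section
/- Let n ≥ 1 be an integer, m ∈ (0,1) with m > (n−2)/n, p := 2/(1−m) − n, and 0 < T ≤ ∞. Let ρ : (0,T)×ℝⁿ → (0,∞) be continuously differentiable in τ and twice continuously differentiable in y, satisfying ∂_τ ρ = (1/m)Δ(ρᵐ) pointwise. Assume the decay bounds: for every compact J ⊂ (0,T) there is C_J with ρ(τ,y) ≤ C_J (1+|y|)^{−(n+p)} and |∇_y ρ(τ,y)| ≤ C_J (1+|y|)^{−(n+p+1)} for all τ ∈ J and y ∈ ℝⁿ. Let h : ℝⁿ → ℝ be a harmonic polynomial (Δh = 0) of degree ℓ with ℓ < p, and assume that for every compact J ⊂ (0,T) there is an integrable g_J : ℝⁿ → [0,∞) with |∂_τ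 ρ(τ,y)·h(y)| ≤ g_J(y) for all τ ∈ J and y ∈ ℝⁿ. Then the moment τ ↦ ∫_{ℝⁿ} ρ(τ,y)·h(y) dy is constant on (0,T). -/
open MeasureTheory Filter
open scoped BigOperators ENNReal Topology

noncomputable section

/-- The `i`-th standard basis vector of `ℝⁿ`. -/
def stdBasis (n : ℕ) (i : Fin n) : EuclideanSpace ℝ (Fin n) :=
  EuclideanSpace.single i 1

/-- The Laplacian (sum of second partial derivatives) of `f : ℝⁿ → ℝ`. -/
def lap (n : ℕ) (f : EuclideanSpace ℝ (Fin n) → ℝ) (x : EuclideanSpace ℝ (Fin n)) : ℝ :=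
  ∑ i : Fin n, fderiv ℝ (fun y => fderiv ℝ f y (stdBasis n i)) x (stdBasis n i)

/-- `x · ∇f x`. -/
def gradDot (n : ℕ) (f : EuclideanSpace ℝ (Fin n) → ℝ) (x : EuclideanSpace ℝ (Fin n)) : ℝ :=
  ∑ i : Fin n, x i * fderiv ℝ f x (stdBasis n i)

/-- The moment parameter `p = 2/(1-m) - n`. -/
def pPar (n : ℕ) (m : ℝ) : ℝ := 2 / (1 - m) - n

/-- The scaling exponent `β = (1 + n/p)/2`. -/
def betaPar (n : ℕ) (m : ℝ) : ℝ := (1 + n / pPar n m) / 2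

/-- The Barenblatt profile `u_B(x) = (B + |x|²)^{-1/(1-m)}`. -/
def uB (n : ℕ) (m B : ℝ) (x : EuclideanSpace ℝ (Fin n)) : ℝ :=
  (B + ‖x‖ ^ 2) ^ (-(1 / (1 - m)))

/-- The Barenblatt solution `ρ_B(τ,y) = (1+2pτ)^{-nβ} u_B((1+2pτ)^{-β} y)`. -/
def rhoB (n : ℕ) (m B : ℝ) (τ : ℝ) (y : EuclideanSpace ℝ (Fin n)) : ℝ :=
  (1 + 2 * pPar n m * τ) ^ (-(n : ℝ) * betaPar n m) *
    uB n m B ((1 + 2 * pPar n m * τ) ^ (-betaPar n m) • y)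

/-- A (positive, continuous up to time 0, smooth for positive times) solution of the
fast diffusion equation `∂_τ ρ = (1/m) Δ (ρ^m)` on `[0,∞) × ℝⁿ`. -/
def IsFDESol (n : ℕ) (m : ℝ) (ρ : ℝ → EuclideanSpace ℝ (Fin n) → ℝ) : Prop :=
  (∀ τ ∈ Set.Ici (0 : ℝ), ∀ y, 0 < ρ τ y) ∧
  ContinuousOn (fun q : ℝ × EuclideanSpace ℝ (Fin n) => ρ q.1 q.2)
    (Set.Ici 0 ×ˢ Set.univ) ∧
  ContDiffOn ℝ (⊤ : ℕ∞) (fun q : ℝ × EuclideanSpace ℝ (Fin n) => ρ q.1 q.2)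
    (Set.Ioi 0 ×ˢ Set.univ) ∧
  ∀ τ ∈ Set.Ioi (0 : ℝ), ∀ y,
    deriv (fun s => ρ s y) τ = (1 / m) * lap n (fun x => ρ τ x ^ m) y

/-- Evaluation of a multivariate polynomial as a function on `ℝⁿ`. -/
def evalPoly (n : ℕ) (P : MvPolynomial (Fin n) ℝ) (x : EuclideanSpace ℝ (Fin n)) : ℝ :=
  MvPolynomial.eval (fun i => x i) P

/-- The `i`-th partial derivative of `f : ℝⁿ → ℝ`. -/
def partialDeriv (n : ℕ) (i : Fin n) (f : EuclideanSpace ℝ (Fin n) → ℝ)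
    (x : EuclideanSpace ℝ (Fin n)) : ℝ :=
  fderiv ℝ f x (stdBasis n i)

section PartialDeriv

variable {n : ℕ} {i : Fin n} {f g : EuclideanSpace ℝ (Fin n) → ℝ}
  {x : EuclideanSpace ℝ (Fin n)}

theorem lap_eq_sum_partialDeriv (f : EuclideanSpace ℝ (Fin n) → ℝ)
    (x : EuclideanSpace ℝ (Fin n)) :
    lap n f x = ∑ i, partialDeriv n i (partialDeriv n i f) x := rfl

theorem partialDeriv_add (hf : DifferentiableAt ℝ f x) (hg : DifferentiableAt ℝ g x) :
    partialDeriv n i (fun y => f y + g y) x = partialDeriv n i f x + partialDeriv n i g x := by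
  simp [partialDeriv, fderiv_fun_add hf hg]

theorem partialDeriv_mul (hf : DifferentiableAt ℝ f x) (hg : DifferentiableAt ℝ g x) :
    partialDeriv n i (fun y => f y * g y) x =
      partialDeriv n i f x * g x + f x * partialDeriv n i g x := by
  simp [partialDeriv, fderiv_fun_mul hf hg]
  ring

theorem partialDeriv_const_mul (c : ℝ) (hf : DifferentiableAt ℝ f x) :
    partialDeriv n i (fun y => c * f y) x = c * partialDeriv n i f x := by
  simp [partialDeriv, fderiv_const_mul hf]

theorem partialDeriv_comp_smul (c : ℝ) :
    partialDeriv n i (fun y => f (c • y)) x = c * partialDeriv n i f (c • x) := by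
  simp [partialDeriv, fderiv_comp_smul]

theorem ContDiff.partialDeriv {k l : WithTop ℕ∞} (hf : ContDiff ℝ l f) (hkl : k + 1 ≤ l) :
    ContDiff ℝ k (partialDeriv n i f) :=
  (hf.fderiv_right hkl).clm_apply contDiff_const

theorem HasCompactSupport.partialDeriv (hf : HasCompactSupport f) :
    HasCompactSupport (partialDeriv n i f) :=
  hf.fderiv_apply ℝ _

theorem Filter.EventuallyEq.partialDeriv (h : f =ᶠ[𝓝 x] g) :
    partialDeriv n i f =ᶠ[𝓝 x] partialDeriv n i g :=
  h.fderiv.fun_comp (fun L => L (stdBasis n i))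

theorem Filter.EventuallyEq.lap_eq (h : f =ᶠ[𝓝 x] g) : lap n f x = lap n g x := by
  simp only [lap_eq_sum_partialDeriv]
  exact Finset.sum_congr rfl fun i _ => h.partialDeriv.partialDeriv.eq_of_nhds

theorem ContDiff.continuous_lap (hf : ContDiff ℝ 2 f) : Continuous (lap n f) :=
  continuous_finsetSum _ fun _ _ =>
    ((hf.partialDeriv (k := 1) (by norm_num)).partialDeriv (k := 0) (by norm_num)).continuous

theorem HasCompactSupport.lap (hf : HasCompactSupport f) : HasCompactSupport (lap n f) := by
  refine hf.mono' fun x hx => ?_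
  by_contra hx'
  refine hx ?_
  rw [(notMem_tsupport_iff_eventuallyEq.1 hx').lap_eq]
  simp [_root_.lap]

theorem lap_comp_smul (c : ℝ) (hf : ContDiff ℝ 2 f) :
    lap n (fun y => f (c • y)) x = c ^ 2 * lap n f (c • x) := by
  simp only [lap_eq_sum_partialDeriv, Finset.mul_sum]
  refine Finset.sum_congr rfl fun i _ => ?_
  have h1 : partialDeriv n i (fun y => f (c • y)) = fun y => c * partialDeriv n i f (c • y) :=
    funext fun y => partialDeriv_comp_smul c
  have hd : ContDiff ℝ 1 (partialDeriv n i f) := hf.partialDeriv (by norm_num)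
  have hd' : ContDiff ℝ 1 (fun y => partialDeriv n i f (c • y)) := by fun_prop
  rw [h1, partialDeriv_const_mul c (hd'.differentiable one_ne_zero).differentiableAt,
    partialDeriv_comp_smul]
  ring

theorem lap_mul (hf : ContDiff ℝ 2 f) (hg : ContDiff ℝ 2 g) :
    lap n (fun y => f y * g y) x =
      lap n f x * g x + 2 * ∑ i, partialDeriv n i f x * partialDeriv n i g x +
        f x * lap n g x := by
  simp only [lap_eq_sum_partialDeriv, Finset.mul_sum, Finset.sum_mul, ← Finset.sum_add_distrib]
  refine Finset.sum_congr rfl fun i _ => ?_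
  have df := hf.differentiable two_ne_zero
  have dg := hg.differentiable two_ne_zero
  have h1 : partialDeriv n i (fun y => f y * g y) =
      fun y => partialDeriv n i f y * g y + f y * partialDeriv n i g y :=
    funext fun y => partialDeriv_mul (df y) (dg y)
  have df' := (hf.partialDeriv (i := i) (k := 1) (by norm_num)).differentiable one_ne_zero
  have dg' := (hg.partialDeriv (i := i) (k := 1) (by norm_num)).differentiable one_ne_zero
  rw [h1, partialDeriv_add ((df' x).fun_mul (dg x)) ((df x).fun_mul (dg' x)),
    partialDeriv_mul (df' x) (dg x), partialDeriv_mul (df x) (dg' x)]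
  ring

theorem integral_mul_partialDeriv (hf : ContDiff ℝ 1 f) (hg : ContDiff ℝ 1 g)
    (hfg : HasCompactSupport f ∨ HasCompactSupport g) :
    ∫ x, f x * partialDeriv n i g x = -∫ x, partialDeriv n i f x * g x := by
  have cf' := (hf.partialDeriv (i := i) (k := 0) (by norm_num)).continuous
  have cg' := (hg.partialDeriv (i := i) (k := 0) (by norm_num)).continuous
  refine integral_mul_fderiv_eq_neg_fderiv_mul_of_integrable ?_ ?_ ?_
    (fun x _ => hf.differentiable one_ne_zero x) (fun x _ => hg.differentiable one_ne_zero x)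
  · exact (cf'.mul hg.continuous).integrable_of_hasCompactSupport
      (hfg.elim (fun h => h.partialDeriv.mul_right) fun h => h.mul_left)
  · exact (hf.continuous.mul cg').integrable_of_hasCompactSupport
      (hfg.elim (fun h => h.mul_right) fun h => h.partialDeriv.mul_left)
  · exact (hf.continuous.mul hg.continuous).integrable_of_hasCompactSupport
      (hfg.elim (fun h => h.mul_right) fun h => h.mul_left)

/-- Green's second identity against a compactly supported function. -/
theorem integral_lap_mul (hf : ContDiff ℝ 2 f) (hg : ContDiff ℝ 2 g)
    (hgc : HasCompactSupport g) :
    ∫ x, lap n f x * g x = ∫ x, f x * lap n g x := by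
  have hf' : ∀ i, ContDiff ℝ 1 (partialDeriv n i f) := fun i => hf.partialDeriv (by norm_num)
  have hg' : ∀ i, ContDiff ℝ 1 (partialDeriv n i g) := fun i => hg.partialDeriv (by norm_num)
  have cf : ∀ i, Continuous (partialDeriv n i (partialDeriv n i f)) :=
    fun i => ((hf' i).partialDeriv (k := 0) (by norm_num)).continuous
  have cg : ∀ i, Continuous (partialDeriv n i (partialDeriv n i g)) :=
    fun i => ((hg' i).partialDeriv (k := 0) (by norm_num)).continuous
  simp only [lap_eq_sum_partialDeriv, Finset.sum_mul, Finset.mul_sum]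
  have hif : ∀ i ∈ Finset.univ, Integrable fun x => partialDeriv n i (partialDeriv n i f) x * g x :=
    fun i _ => ((cf i).mul hg.continuous).integrable_of_hasCompactSupport hgc.mul_left
  have hig : ∀ i ∈ Finset.univ, Integrable fun x => f x * partialDeriv n i (partialDeriv n i g) x :=
    fun i _ => (hf.continuous.mul (cg i)).integrable_of_hasCompactSupport
      hgc.partialDeriv.partialDeriv.mul_left
  rw [integral_finsetSum _ hif, integral_finsetSum _ hig]
  refine Finset.sum_congr rfl fun i _ => ?_
  rw [integral_mul_partialDeriv (hf.of_le (by norm_num)) (hg' i) (.inr hgc.partialDeriv),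
    integral_mul_partialDeriv (hf' i) (hg.of_le (by norm_num)) (.inr hgc), neg_neg]

end PartialDeriv

section Polynomial

variable {n : ℕ}

theorem contDiff_evalPoly (P : MvPolynomial (Fin n) ℝ) {k : WithTop ℕ∞} :
    ContDiff ℝ k (evalPoly n P) := by
  unfold evalPoly
  simp only [MvPolynomial.eval_eq']
  refine ContDiff.sum fun d _ => contDiff_const.mul (contDiff_prod fun i _ => ?_)
  fun_prop

theorem partialDeriv_evalPoly (i : Fin n) (P : MvPolynomial (Fin n) ℝ)
    (x : EuclideanSpace ℝ (Fin n)) :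
    partialDeriv n i (evalPoly n P) x = evalPoly n (MvPolynomial.pderiv i P) x := by
  have hd : ∀ Q : MvPolynomial (Fin n) ℝ, DifferentiableAt ℝ (evalPoly n Q) x := fun Q =>
    ((contDiff_evalPoly Q (k := 1)).differentiable one_ne_zero).differentiableAt
  induction P using MvPolynomial.induction_on with
  | C a =>
    have : evalPoly n (MvPolynomial.C a) = fun _ => a := by ext; simp [evalPoly]
    simp [this, partialDeriv, evalPoly]
  | add P Q hP hQ =>
    have : evalPoly n (P + Q) = fun y => evalPoly n P y + evalPoly n Q y := by
      ext; simp [evalPoly]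
    rw [this, partialDeriv_add (hd P) (hd Q), hP, hQ]
    simp [evalPoly]
  | mul_X P j hP =>
    have hX : partialDeriv n i (evalPoly n (MvPolynomial.X j)) x =
        evalPoly n (MvPolynomial.pderiv i (MvPolynomial.X j)) x := by
      have : evalPoly n (MvPolynomial.X j) = EuclideanSpace.proj (𝕜 := ℝ) j := by
        ext; simp [evalPoly]
      rw [this, partialDeriv, ContinuousLinearMap.fderiv, MvPolynomial.pderiv_X]
      by_cases hij : j = i <;> simp [stdBasis, evalPoly, hij]
    have : evalPoly n (P * MvPolynomial.X j) =
        fun y => evalPoly n P y * evalPoly n (MvPolynomial.X j) y := by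
      ext; simp [evalPoly]
    rw [this, partialDeriv_mul (hd P) (hd _), hP, hX, MvPolynomial.pderiv_mul]
    simp [evalPoly]

theorem totalDegree_pderiv_succ_le (i : Fin n) (P : MvPolynomial (Fin n) ℝ)
    (hP : MvPolynomial.pderiv i P ≠ 0) :
    (MvPolynomial.pderiv i P).totalDegree + 1 ≤ P.totalDegree := by
  obtain ⟨s, hs, hsd⟩ := Finset.exists_mem_eq_sup _ (MvPolynomial.support_nonempty.2 hP)
    (fun s : Fin n →₀ ℕ => s.sum fun _ e => e)
  have hs' : s + Finsupp.single i 1 ∈ P.support := by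
    rw [MvPolynomial.mem_support_iff, MvPolynomial.coeff_pderiv] at hs
    exact MvPolynomial.mem_support_iff.2 (left_ne_zero_of_mul hs)
  have := MvPolynomial.le_totalDegree hs'
  rw [Finsupp.sum_add_index' (fun _ => rfl) (fun _ _ _ => rfl),
    Finsupp.sum_single_index rfl] at this
  rw [MvPolynomial.totalDegree, hsd]
  exact this

theorem exists_abs_evalPoly_le (P : MvPolynomial (Fin n) ℝ) :
    ∃ C, 0 ≤ C ∧ ∀ y, |evalPoly n P y| ≤ C * (1 + ‖y‖) ^ P.totalDegree := by
  refine ⟨∑ d ∈ P.support, |P.coeff d|, Finset.sum_nonneg fun _ _ => abs_nonneg _, fun y => ?_⟩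
  rw [evalPoly, MvPolynomial.eval_eq', Finset.sum_mul]
  refine (Finset.abs_sum_le_sum_abs _ _).trans (Finset.sum_le_sum fun d hd => ?_)
  rw [abs_mul, Finset.abs_prod]
  refine mul_le_mul_of_nonneg_left ?_ (abs_nonneg _)
  have h1 : (1 : ℝ) ≤ 1 + ‖y‖ := le_add_of_nonneg_right (norm_nonneg y)
  calc ∏ i, |y i ^ d i| ≤ ∏ i, (1 + ‖y‖) ^ d i := by
        refine Finset.prod_le_prod (fun _ _ => abs_nonneg _) fun i _ => ?_
        rw [abs_pow]
        have := PiLp.norm_apply_le y i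
        rw [Real.norm_eq_abs] at this
        exact pow_le_pow_left₀ (abs_nonneg _) (by linarith) _
    _ = (1 + ‖y‖) ^ (∑ i, d i) := Finset.prod_pow_eq_pow_sum _ _ _
    _ ≤ (1 + ‖y‖) ^ P.totalDegree := by
        refine pow_le_pow_right₀ h1 ?_
        have := MvPolynomial.le_totalDegree hd
        rwa [Finsupp.sum_fintype _ _ fun _ => rfl] at this

theorem exists_abs_partialDeriv_evalPoly_le (i : Fin n) (P : MvPolynomial (Fin n) ℝ) :
    ∃ C, 0 ≤ C ∧ ∀ y, |partialDeriv n i (evalPoly n P) y| * (1 + ‖y‖) ≤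
      C * (1 + ‖y‖) ^ P.totalDegree := by
  obtain ⟨C, hC, h⟩ := exists_abs_evalPoly_le (MvPolynomial.pderiv i P)
  refine ⟨C, hC, fun y => ?_⟩
  rw [partialDeriv_evalPoly]
  by_cases hP : MvPolynomial.pderiv i P = 0
  · have : evalPoly n (0 : MvPolynomial (Fin n) ℝ) y = 0 := by simp [evalPoly]
    rw [hP, this, abs_zero, zero_mul]
    positivity
  · have h1 : (1 : ℝ) ≤ 1 + ‖y‖ := le_add_of_nonneg_right (norm_nonneg y)
    calc _ ≤ C * (1 + ‖y‖) ^ (MvPolynomial.pderiv i P).totalDegree * (1 + ‖y‖) :=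
          mul_le_mul_of_nonneg_right (h y) (by positivity)
      _ = C * (1 + ‖y‖) ^ ((MvPolynomial.pderiv i P).totalDegree + 1) := by rw [pow_succ, mul_assoc]
      _ ≤ _ := mul_le_mul_of_nonneg_left
          (pow_le_pow_right₀ h1 (totalDegree_pderiv_succ_le i P hP)) hC

end Polynomial

section Cutoff

variable {n : ℕ}

/-- A smooth bump on `ℝⁿ`, equal to `1` on the unit ball and supported in the ball of radius 2. -/
def unitBump (n : ℕ) : ContDiffBump (0 : EuclideanSpace ℝ (Fin n)) :=
  ⟨1, 2, one_pos, one_lt_two⟩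

/-- The dilated bump, equal to `1` on the ball of radius `k + 1`. -/
def cutoff (n k : ℕ) (y : EuclideanSpace ℝ (Fin n)) : ℝ :=
  unitBump n (((k : ℝ) + 1)⁻¹ • y)

theorem contDiff_cutoff (k : ℕ) : ContDiff ℝ 2 (cutoff n k) :=
  (unitBump n).contDiff.comp (contDiff_const_smul _)

theorem hasCompactSupport_cutoff (k : ℕ) : HasCompactSupport (cutoff n k) :=
  (unitBump n).hasCompactSupport.comp_smul (by positivity)

theorem abs_cutoff_le_one (k : ℕ) (y : EuclideanSpace ℝ (Fin n)) : |cutoff n k y| ≤ 1 := by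
  rw [cutoff, abs_of_nonneg (unitBump n).nonneg]
  exact (unitBump n).le_one

theorem cutoff_eq_one {k : ℕ} {y : EuclideanSpace ℝ (Fin n)} (hy : ‖y‖ ≤ k + 1) :
    cutoff n k y = 1 := by
  refine (unitBump n).one_of_mem_closedBall ?_
  rw [mem_closedBall_zero_iff, norm_smul, norm_inv, Real.norm_of_nonneg (by positivity)]
  exact inv_mul_le_one_of_le₀ hy (by positivity)

theorem eventually_cutoff_eventuallyEq_one (y : EuclideanSpace ℝ (Fin n)) :
    ∀ᶠ k : ℕ in atTop, cutoff n k =ᶠ[𝓝 y] fun _ => 1 := by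
  obtain ⟨K, hK⟩ := exists_nat_gt ‖y‖
  filter_upwards [eventually_ge_atTop K] with k hk
  filter_upwards [continuous_norm.continuousAt.eventually_lt continuousAt_const hK] with z hz
  have : (K : ℝ) ≤ k := by exact_mod_cast hk
  exact cutoff_eq_one (by linarith)

theorem exists_abs_dilate_mul_le {ψ : EuclideanSpace ℝ (Fin n) → ℝ} (hc : Continuous ψ)
    (hs : HasCompactSupport ψ) (l : ℕ) :
    ∃ C, 0 ≤ C ∧ ∀ c : ℝ, 0 < c → c ≤ 1 → ∀ y, |c ^ l * ψ (c • y)| * (1 + ‖y‖) ^ l ≤ C := by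
  have hc' : Continuous fun y => ψ y * (1 + ‖y‖) ^ l := by fun_prop
  obtain ⟨C, hC⟩ := hc'.bounded_above_of_compact_support hs.mul_right
  refine ⟨C, (norm_nonneg _).trans (hC 0), fun c hc0 hc1 y => le_trans ?_ (hC (c • y))⟩
  rw [norm_mul, abs_mul, Real.norm_eq_abs, Real.norm_of_nonneg (by positivity),
    abs_of_nonneg (by positivity), mul_comm (c ^ l), mul_assoc, ← mul_pow, norm_smul,
    Real.norm_of_nonneg hc0.le]
  gcongr
  linarith

theorem exists_abs_partialDeriv_cutoff_le (i : Fin n) :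
    ∃ C, 0 ≤ C ∧ ∀ k y, |partialDeriv n i (cutoff n k) y| * (1 + ‖y‖) ≤ C := by
  have hχ : ContDiff ℝ 2 (unitBump n) := (unitBump n).contDiff
  obtain ⟨C, hC, h⟩ := exists_abs_dilate_mul_le
    (hχ.partialDeriv (i := i) (k := 1) (by norm_num)).continuous
    (unitBump n).hasCompactSupport.partialDeriv 1
  refine ⟨C, hC, fun k y => ?_⟩
  have := h ((k : ℝ) + 1)⁻¹ (by positivity) (inv_le_one_of_one_le₀ (by simp)) y
  rw [pow_one, pow_one, ← partialDeriv_comp_smul] at this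
  exact this

theorem exists_abs_lap_cutoff_le :
    ∃ C, 0 ≤ C ∧ ∀ k y, |lap n (cutoff n k) y| * (1 + ‖y‖) ^ 2 ≤ C := by
  have hχ : ContDiff ℝ 2 (unitBump n) := (unitBump n).contDiff
  obtain ⟨C, hC, h⟩ := exists_abs_dilate_mul_le hχ.continuous_lap
    (unitBump n).hasCompactSupport.lap 2
  refine ⟨C, hC, fun k y => ?_⟩
  have := h ((k : ℝ) + 1)⁻¹ (by positivity) (inv_le_one_of_one_le₀ (by simp)) y
  rw [← lap_comp_smul _ hχ] at this
  exact this

/-- Truncating a harmonic polynomial of degree `ℓ` costs a Laplacian of size `|y| ^ (ℓ - 2)`,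
uniformly in the truncation radius. -/
theorem exists_abs_lap_evalPoly_mul_cutoff_le (P : MvPolynomial (Fin n) ℝ)
    (hP : ∀ x, lap n (evalPoly n P) x = 0) :
    ∃ C, 0 ≤ C ∧ ∀ k y, |lap n (fun y => evalPoly n P y * cutoff n k y) y| * (1 + ‖y‖) ^ 2 ≤
      C * (1 + ‖y‖) ^ P.totalDegree := by
  obtain ⟨A, hA, hPA⟩ := exists_abs_evalPoly_le P
  choose B hB hPB using fun i => exists_abs_partialDeriv_evalPoly_le i P
  choose D hD hχD using fun i => exists_abs_partialDeriv_cutoff_le (n := n) i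
  obtain ⟨F, hF, hχF⟩ := exists_abs_lap_cutoff_le (n := n)
  refine ⟨2 * ∑ i, B i * D i + A * F, add_nonneg (mul_nonneg two_pos.le
    (Finset.sum_nonneg fun i _ => mul_nonneg (hB i) (hD i))) (mul_nonneg hA hF), fun k y => ?_⟩
  rw [lap_mul (contDiff_evalPoly P) (contDiff_cutoff k), hP, zero_mul, zero_add]
  set N := 1 + ‖y‖ with hN
  have hN0 : 0 < N := by positivity
  have hsum : |∑ i, partialDeriv n i (evalPoly n P) y * partialDeriv n i (cutoff n k) y| * N ^ 2 ≤
      (∑ i, B i * D i) * N ^ P.totalDegree := by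
    rw [Finset.sum_mul]
    refine (mul_le_mul_of_nonneg_right (Finset.abs_sum_le_sum_abs _ _) (sq_nonneg N)).trans ?_
    rw [Finset.sum_mul]
    refine Finset.sum_le_sum fun i _ => ?_
    calc _ = (|partialDeriv n i (evalPoly n P) y| * N) *
            (|partialDeriv n i (cutoff n k) y| * N) := by rw [abs_mul]; ring
      _ ≤ (B i * N ^ P.totalDegree) * D i :=
          mul_le_mul (hPB i y) (hχD i k y) (by positivity) (mul_nonneg (hB i) (by positivity))
      _ = _ := by ring
  have hlap : |evalPoly n P y * lap n (cutoff n k) y| * N ^ 2 ≤ A * F * N ^ P.totalDegree := by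
    calc _ = |evalPoly n P y| * (|lap n (cutoff n k) y| * N ^ 2) := by rw [abs_mul]; ring
      _ ≤ (A * N ^ P.totalDegree) * F :=
          mul_le_mul (hPA y) (hχF k y) (by positivity) (mul_nonneg hA (by positivity))
      _ = _ := by ring
  refine (mul_le_mul_of_nonneg_right (abs_add_le _ _) (sq_nonneg N)).trans ?_
  rw [abs_mul 2, abs_two]
  linarith

theorem eventually_lap_evalPoly_mul_cutoff_eq_zero (P : MvPolynomial (Fin n) ℝ)
    (hP : ∀ x, lap n (evalPoly n P) x = 0) (y : EuclideanSpace ℝ (Fin n)) :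
    ∀ᶠ k : ℕ in atTop, lap n (fun y => evalPoly n P y * cutoff n k y) y = 0 := by
  filter_upwards [eventually_cutoff_eventuallyEq_one y] with k hk
  have : (fun y => evalPoly n P y * cutoff n k y) =ᶠ[𝓝 y] evalPoly n P := by
    filter_upwards [hk] with z hz
    rw [hz, mul_one]
  rw [this.lap_eq, hP]

end Cutoff

section Evolution

variable {n : ℕ}

theorem integrable_one_add_norm_rpow_mul_pow {q : ℝ} {l : ℕ} (hq : (n : ℝ) + l < q) :
    Integrable fun y : EuclideanSpace ℝ (Fin n) => (1 + ‖y‖) ^ (-q) * (1 + ‖y‖) ^ l := by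
  have : Integrable fun y : EuclideanSpace ℝ (Fin n) => (1 + ‖y‖) ^ (-(q - l)) :=
    integrable_one_add_norm (by simp; linarith)
  refine this.congr (.of_forall fun y => ?_)
  have : (0 : ℝ) < 1 + ‖y‖ := by positivity
  simp only [← Real.rpow_natCast, ← Real.rpow_add this]
  ring_nf

theorem exists_isCompact_mem_nhds_subset {S : Set ℝ} (hS : IsOpen S) {τ : ℝ} (hτ : τ ∈ S) :
    ∃ J ∈ 𝓝 τ, IsCompact J ∧ J ⊆ S := by
  obtain ⟨J, hJ, hJS, hJc⟩ := local_compact_nhds (hS.mem_nhds hτ)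
  exact ⟨J, hJ, hJc, hJS⟩

/-- Differentiation of a moment truncated by `χ`. -/
theorem hasDerivAt_integral_mul {ρ : ℝ → EuclideanSpace ℝ (Fin n) → ℝ} {S J : Set ℝ}
    (hS : IsOpen S) {τ : ℝ} (hJ : J ∈ 𝓝 τ) (hJS : J ⊆ S)
    (hρt : ∀ y, ContDiffOn ℝ 1 (fun τ => ρ τ y) S) (hρx : ∀ τ ∈ S, Continuous (ρ τ))
    (hρ' : Continuous fun y => deriv (fun s => ρ s y) τ)
    {h χ g : EuclideanSpace ℝ (Fin n) → ℝ} (hh : Continuous h) (hχ : Continuous χ)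
    (hχc : HasCompactSupport χ) (hχ1 : ∀ y, |χ y| ≤ 1) (hg : Integrable g)
    (hdom : ∀ s ∈ J, ∀ y, |deriv (fun s => ρ s y) s * h y| ≤ g y) :
    HasDerivAt (fun s => ∫ y, ρ s y * (h y * χ y))
      (∫ y, deriv (fun s => ρ s y) τ * (h y * χ y)) τ := by
  have hcont : ∀ s ∈ S, Continuous fun y => ρ s y * (h y * χ y) := fun s hs =>
    (hρx s hs).mul (hh.mul hχ)
  refine (hasDerivAt_integral_of_dominated_loc_of_deriv_le (bound := g)
    (F' := fun s y => deriv (fun s => ρ s y) s * (h y * χ y)) hJ ?_ ?_ ?_ ?_ hg ?_).2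
  · filter_upwards [hJ] with s hs
    exact (hcont s (hJS hs)).aestronglyMeasurable
  · exact (hcont τ (hJS (mem_of_mem_nhds hJ))).integrable_of_hasCompactSupport
      hχc.mul_left.mul_left
  · exact (hρ'.mul (hh.mul hχ)).aestronglyMeasurable
  · refine .of_forall fun y s hs => ?_
    rw [Real.norm_eq_abs, ← mul_assoc, abs_mul]
    exact (mul_le_of_le_one_right (abs_nonneg _) (hχ1 y)).trans (hdom s hs y)
  · refine .of_forall fun y s hs => HasDerivAt.mul_const ?_ _
    exact (((hρt y).differentiableOn one_ne_zero).differentiableAt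
      (hS.mem_nhds (hJS hs))).hasDerivAt

/-- The truncated moments of a function with polynomial decay converge to the full moment. -/
theorem tendsto_integral_mul_cutoff {r : EuclideanSpace ℝ (Fin n) → ℝ} (hr : Continuous r)
    {C q : ℝ} (hC : ∀ y, |r y| ≤ C * (1 + ‖y‖) ^ (-q)) (P : MvPolynomial (Fin n) ℝ)
    (hq : (n : ℝ) + P.totalDegree < q) :
    Tendsto (fun k => ∫ y, r y * (evalPoly n P y * cutoff n k y)) atTop
      (𝓝 (∫ y, r y * evalPoly n P y)) := by
  have hP : Continuous (evalPoly n P) := (contDiff_evalPoly P (k := 2)).continuous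
  obtain ⟨A, hA, hPA⟩ := exists_abs_evalPoly_le P
  refine tendsto_integral_of_dominated_convergence
    (fun y => C * A * ((1 + ‖y‖) ^ (-q) * (1 + ‖y‖) ^ P.totalDegree))
    (fun k => (hr.mul (hP.mul (contDiff_cutoff k).continuous)).aestronglyMeasurable)
    ((integrable_one_add_norm_rpow_mul_pow hq).const_mul _) ?_ ?_
  · refine fun k => .of_forall fun y => ?_
    rw [Real.norm_eq_abs, ← mul_assoc, abs_mul, abs_mul]
    calc _ ≤ |r y| * |evalPoly n P y| :=
          mul_le_of_le_one_right (by positivity) (abs_cutoff_le_one k y)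
      _ ≤ (C * (1 + ‖y‖) ^ (-q)) * (A * (1 + ‖y‖) ^ P.totalDegree) :=
          mul_le_mul (hC y) (hPA y) (abs_nonneg _) ((abs_nonneg _).trans (hC y))
      _ = _ := by ring
  · refine .of_forall fun y => tendsto_const_nhds.congr' ?_
    filter_upwards [eventually_cutoff_eventuallyEq_one y] with k hk
    rw [hk.eq_of_nhds, mul_one]

/-- Against a weight of order `|y| ^ (2 - q)`, the Laplacians of the truncations of a harmonic
polynomial of degree less than `q - n` vanish in the limit. -/
theorem tendsto_integral_lap_evalPoly_mul_cutoff {q : ℝ} (P : MvPolynomial (Fin n) ℝ)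
    (hP : ∀ x, lap n (evalPoly n P) x = 0) (hq : (n : ℝ) + P.totalDegree < q) :
    (∀ k, Integrable fun y => (1 + ‖y‖) ^ (-(q - 2)) *
      |lap n (fun y => evalPoly n P y * cutoff n k y) y|) ∧
    Tendsto (fun k => ∫ y, (1 + ‖y‖) ^ (-(q - 2)) *
      |lap n (fun y => evalPoly n P y * cutoff n k y) y|) atTop (𝓝 0) := by
  obtain ⟨A, hA, hPA⟩ := exists_abs_lap_evalPoly_mul_cutoff_le P hP
  have hcont : ∀ k, Continuous fun y : EuclideanSpace ℝ (Fin n) => (1 + ‖y‖) ^ (-(q - 2)) *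
      |lap n (fun y => evalPoly n P y * cutoff n k y) y| := fun k =>
    ((continuous_const.add continuous_norm).rpow_const fun y =>
      .inl (show 1 + ‖y‖ ≠ 0 by positivity)).mul
      ((contDiff_evalPoly P).mul (contDiff_cutoff k)).continuous_lap.abs
  have hint : Integrable fun y : EuclideanSpace ℝ (Fin n) =>
      A * ((1 + ‖y‖) ^ (-q) * (1 + ‖y‖) ^ P.totalDegree) :=
    (integrable_one_add_norm_rpow_mul_pow hq).const_mul _
  have hbound : ∀ k, ∀ y : EuclideanSpace ℝ (Fin n), ‖(1 + ‖y‖) ^ (-(q - 2)) *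
      |lap n (fun y => evalPoly n P y * cutoff n k y) y|‖ ≤
        A * ((1 + ‖y‖) ^ (-q) * (1 + ‖y‖) ^ P.totalDegree) := fun k y => by
    have hN : (0 : ℝ) < 1 + ‖y‖ := by positivity
    have hsplit : (1 + ‖y‖) ^ (-(q - 2)) = (1 + ‖y‖) ^ (-q) * (1 + ‖y‖) ^ 2 := by
      rw [← Real.rpow_natCast, ← Real.rpow_add hN]
      push_cast
      ring_nf
    rw [Real.norm_of_nonneg (by positivity), hsplit]
    calc _ = (1 + ‖y‖) ^ (-q) *
            (|lap n (fun y => evalPoly n P y * cutoff n k y) y| * (1 + ‖y‖) ^ 2) := by ring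
      _ ≤ (1 + ‖y‖) ^ (-q) * (A * (1 + ‖y‖) ^ P.totalDegree) :=
          mul_le_mul_of_nonneg_left (hPA k y) (by positivity)
      _ = _ := by ring
  refine ⟨fun k => hint.mono' (hcont k).aestronglyMeasurable (.of_forall (hbound k)), ?_⟩
  rw [← integral_zero (EuclideanSpace ℝ (Fin n)) ℝ]
  refine tendsto_integral_of_dominated_convergence _ (fun k => (hcont k).aestronglyMeasurable)
    hint (fun k => .of_forall (hbound k)) (.of_forall fun y => tendsto_const_nhds.congr' ?_)
  filter_upwards [eventually_lap_evalPoly_mul_cutoff_eq_zero P hP y] with k hk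
  rw [hk, abs_zero, mul_zero]

/-- The truncated moment of a solution of the fast diffusion equation moves at a rate controlled
by the Laplacian of the test function. -/
theorem abs_integral_lap_rpow_mul_le {m q C : ℝ} (hm0 : 0 < m) (hq : m * q = q - 2)
    {r φ : EuclideanSpace ℝ (Fin n) → ℝ} (hr0 : ∀ y, 0 < r y) (hr : ContDiff ℝ 2 r)
    (hrC : ∀ y, r y ≤ C * (1 + ‖y‖) ^ (-q)) (hφ : ContDiff ℝ 2 φ) (hφc : HasCompactSupport φ)
    (hφi : Integrable fun y => (1 + ‖y‖) ^ (-(q - 2)) * |lap n φ y|) :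
    |∫ y, (1 / m * lap n (fun x => r x ^ m) y) * φ y| ≤
      1 / m * C ^ m * ∫ y, (1 + ‖y‖) ^ (-(q - 2)) * |lap n φ y| := by
  have hu : ContDiff ℝ 2 fun x => r x ^ m := hr.rpow_const_of_ne fun y => (hr0 y).ne'
  have hC : 0 ≤ C := by
    have := (hr0 0).trans_le (hrC 0)
    exact (pos_of_mul_pos_left this (by positivity)).le
  simp only [mul_assoc]
  rw [integral_const_mul, integral_lap_mul hu hφ hφc, abs_mul, abs_of_pos (by positivity),
    ← integral_const_mul, ← Real.norm_eq_abs (∫ _, _)]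
  refine mul_le_mul_of_nonneg_left ?_ (by positivity)
  refine norm_integral_le_of_norm_le (hφi.const_mul _) (.of_forall fun y => ?_)
  have hN : (0 : ℝ) < 1 + ‖y‖ := by positivity
  have := hr0 y
  rw [norm_mul, Real.norm_eq_abs, Real.norm_eq_abs, abs_of_nonneg (by positivity), ← mul_assoc]
  refine mul_le_mul_of_nonneg_right ?_ (abs_nonneg _)
  calc r y ^ m ≤ (C * (1 + ‖y‖) ^ (-q)) ^ m := Real.rpow_le_rpow this.le (hrC y) hm0.le
    _ = C ^ m * (1 + ‖y‖) ^ (-(q - 2)) := by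
        rw [Real.mul_rpow hC (by positivity), ← Real.rpow_mul hN.le, ← hq]
        ring_nf

end Evolution

/-- **Conservation of harmonic-polynomial moments** for solutions of the fast
diffusion equation on `(0,T)` (0 < T ≤ ∞) with suitable decay: the moment
`τ ↦ ∫ ρ(τ,y) h(y) dy` is constant whenever `h` is harmonic of degree `< p`. -/
theorem statement19
    (n : ℕ) (hn : 1 ≤ n) (m : ℝ) (hm0 : 0 < m) (hm1 : m < 1)
    (hm : ((n : ℝ) - 2) / n < m)
    (T : ℝ≥0∞) (hT : 0 < T)
    (S : Set ℝ) (hS : S = {τ : ℝ | 0 < τ ∧ ENNReal.ofReal τ < T})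
    (ρ : ℝ → EuclideanSpace ℝ (Fin n) → ℝ)
    (hpos : ∀ τ ∈ S, ∀ y, 0 < ρ τ y)
    (hreg_t : ∀ y, ContDiffOn ℝ 1 (fun τ => ρ τ y) S)
    (hreg_x : ∀ τ ∈ S, ContDiff ℝ 2 (ρ τ))
    (hPDE : ∀ τ ∈ S, ∀ y,
      deriv (fun s => ρ s y) τ = (1 / m) * lap n (fun x => ρ τ x ^ m) y)
    (hdecay : ∀ J : Set ℝ, IsCompact J → J ⊆ S → ∃ C : ℝ, ∀ τ ∈ J, ∀ y,
      ρ τ y ≤ C * (1 + ‖y‖) ^ (-((n : ℝ) + pPar n m)) ∧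
      ‖fderiv ℝ (ρ τ) y‖ ≤ C * (1 + ‖y‖) ^ (-((n : ℝ) + pPar n m + 1)))
    (h : MvPolynomial (Fin n) ℝ)
    (hharm : ∀ x, lap n (evalPoly n h) x = 0)
    (hdeg : (h.totalDegree : ℝ) < pPar n m)
    (hdom : ∀ J : Set ℝ, IsCompact J → J ⊆ S →
      ∃ g : EuclideanSpace ℝ (Fin n) → ℝ, Integrable g ∧
        ∀ τ ∈ J, ∀ y, |deriv (fun s => ρ s y) τ * evalPoly n h y| ≤ g y)
    (τ₁ τ₂ : ℝ) (h1 : τ₁ ∈ S) (h2 : τ₂ ∈ S) :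
    ∫ y, ρ τ₁ y * evalPoly n h y = ∫ y, ρ τ₂ y * evalPoly n h y := by
  have hSo : IsOpen S := hS ▸ (isOpen_lt continuous_const continuous_id).inter
    (isOpen_lt ENNReal.continuous_ofReal continuous_const)
  have hJS : Set.uIcc τ₁ τ₂ ⊆ S := by
    have : S.OrdConnected := by
      subst hS
      exact ⟨fun a ha b hb c hc => ⟨ha.1.trans_le hc.1,
        (ENNReal.ofReal_le_ofReal hc.2).trans_lt hb.2⟩⟩
    exact this.uIcc_subset h1 h2
  obtain ⟨C, hC⟩ := hdecay _ isCompact_uIcc hJS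
  set q := (n : ℝ) + pPar n m with hq
  have hmq : m * q = q - 2 := by
    have : 1 - m ≠ 0 := by linarith
    rw [hq, pPar]
    field_simp
    ring
  have hdq : (n : ℝ) + h.totalDegree < q := by linarith
  obtain ⟨hint, hlim⟩ := tendsto_integral_lap_evalPoly_mul_cutoff h hharm hdq
  have hφ : ∀ k, ContDiff ℝ 2 fun y => evalPoly n h y * cutoff n k y := fun k =>
    (contDiff_evalPoly h).mul (contDiff_cutoff k)
  have hmoment : ∀ τ ∈ Set.uIcc τ₁ τ₂,
      Tendsto (fun k => ∫ y, ρ τ y * (evalPoly n h y * cutoff n k y)) atTop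
        (𝓝 (∫ y, ρ τ y * evalPoly n h y)) := fun τ hτ =>
    tendsto_integral_mul_cutoff (hreg_x τ (hJS hτ)).continuous
      (fun y => (abs_of_pos (hpos τ (hJS hτ) y)).trans_le (hC τ hτ y).1) h hdq
  have hderiv : ∀ k, ∀ τ ∈ S,
      HasDerivAt (fun s => ∫ y, ρ s y * (evalPoly n h y * cutoff n k y))
        (∫ y, deriv (fun s => ρ s y) τ * (evalPoly n h y * cutoff n k y)) τ := by
    intro k τ hτ
    obtain ⟨J, hJ, hJc, hJS'⟩ := exists_isCompact_mem_nhds_subset hSo hτ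
    obtain ⟨g, hg, hgJ⟩ := hdom J hJc hJS'
    refine hasDerivAt_integral_mul hSo hJ hJS' hreg_t (fun s hs => (hreg_x s hs).continuous) ?_
      (contDiff_evalPoly h (k := 2)).continuous (contDiff_cutoff k).continuous
      (hasCompactSupport_cutoff k) (abs_cutoff_le_one k) hg hgJ
    simp only [hPDE τ hτ]
    exact continuous_const.mul
      ((hreg_x τ hτ).rpow_const_of_ne fun y => (hpos τ hτ y).ne').continuous_lap
  have hrate : ∀ k, ‖(∫ y, ρ τ₂ y * (evalPoly n h y * cutoff n k y)) -
      ∫ y, ρ τ₁ y * (evalPoly n h y * cutoff n k y)‖ ≤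
        (1 / m * C ^ m * ∫ y, (1 + ‖y‖) ^ (-(q - 2)) *
          |lap n (fun y => evalPoly n h y * cutoff n k y) y|) * ‖τ₂ - τ₁‖ := by
    intro k
    refine (convex_uIcc τ₁ τ₂).norm_image_sub_le_of_norm_hasDerivWithin_le
      (f := fun s => ∫ y, ρ s y * (evalPoly n h y * cutoff n k y))
      (fun τ hτ => (hderiv k τ (hJS hτ)).hasDerivWithinAt) (fun τ hτ => ?_)
      Set.left_mem_uIcc Set.right_mem_uIcc
    simp only [hPDE τ (hJS hτ)]
    exact abs_integral_lap_rpow_mul_le hm0 hmq (hpos τ (hJS hτ)) (hreg_x τ (hJS hτ))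
      (fun y => (hC τ hτ y).1) (hφ k) (hasCompactSupport_cutoff k).mul_left (hint k)
  have hle := le_of_tendsto_of_tendsto'
    ((hmoment τ₂ Set.right_mem_uIcc).sub (hmoment τ₁ Set.left_mem_uIcc)).norm
    ((hlim.const_mul (1 / m * C ^ m)).mul_const ‖τ₂ - τ₁‖) hrate
  rw [mul_zero, zero_mul] at hle
  exact (sub_eq_zero.1 (norm_le_zero_iff.1 hle)).symm
end
end
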